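/- Let ζ_p ⊂ Y_p be (the lift to the warped product M = M₄ ×_f Y of) a compact submanifold of Y of co-dimension m, γ a null geodesic orthogonal to ζ_p with tangent N = (N̂, N̄), {E_A} the parallel transports along γ of an orthonormal basis {e_A} of vectors tangent to ζ_p, and P^{νσ} = γ^{AB} E^ν_A E^σ_B the parallel propagation of the projector onto ζ_p. Then R_{μνρσ} N^μ N^ρ P^{νσ} = δ^{AB} R̄_{ijkl} N̄^i N̄^k Ē^j_{A∥} Ē^l_{B∥} − (D−m) f⁻¹ N̂^a ∇̂_a (N̂^b ∇̂_b f)|_γ = [ f⁻⁴ δ^{AB} R̄_{ijkl} 𝒩^i 𝒩^k Ē^j_{A∥} Ē^l_{B∥} − (D−m) f⁻¹ d²f/du² ]|_γ, where Ē^i_{A∥} are the ḡ-parallel transports along the fiber projection of γ of f|_p e^i_A, and 𝒩^i = f² N̄^i. -/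

import Mathlib

open Filter MeasureTheory
open scoped BigOperators Topology

noncomputable section

namespace Paper

variable {ι : Type*} [Fintype ι] [DecidableEq ι]
variable {κ : Type*} [Fintype κ] [DecidableEq κ]

/-- Coordinate partial derivative of a scalar field in the direction `ρ`. -/
def pd (h : (ι → ℝ) → ℝ) (ρ : ι) (x : ι → ℝ) : ℝ :=
  fderiv ℝ h x (Pi.single ρ 1)

/-- The inverse metric. -/
def ginv (g : (ι → ℝ) → Matrix ι ι ℝ) (x : ι → ℝ) : Matrix ι ι ℝ :=
  (g x)⁻¹

/-- Christoffel symbols `Γ^μ_{ρσ} = ½ g^{μν}(∂_ρ g_{νσ} + ∂_σ g_{νρ} − ∂_ν g_{ρσ})`. -/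
def Γc (g : (ι → ℝ) → Matrix ι ι ℝ) (μ ρ σ : ι) (x : ι → ℝ) : ℝ :=
  (1 / 2) * ∑ ν, ginv g x μ ν *
    (pd (fun y => g y ν σ) ρ x + pd (fun y => g y ν ρ) σ x - pd (fun y => g y ρ σ) ν x)

/-- Riemann curvature tensor `R^α_{βμν}`. -/
def Riem (g : (ι → ℝ) → Matrix ι ι ℝ) (α β μ ν : ι) (x : ι → ℝ) : ℝ :=
  pd (Γc g α ν β) μ x - pd (Γc g α μ β) ν x
    + ∑ lam, Γc g α μ lam x * Γc g lam ν β x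
    - ∑ lam, Γc g α ν lam x * Γc g lam μ β x

/-- Riemann tensor with the first index lowered, `R_{μνρσ} = g_{μλ} R^λ_{νρσ}`. -/
def RiemLow (g : (ι → ℝ) → Matrix ι ι ℝ) (μ ν ρ σ : ι) (x : ι → ℝ) : ℝ :=
  ∑ lam, g x μ lam * Riem g lam ν ρ σ x

/-- Ricci tensor `R_{μν} = R^ρ_{μρν}`. -/
def Ric (g : (ι → ℝ) → Matrix ι ι ℝ) (μ ν : ι) (x : ι → ℝ) : ℝ :=
  ∑ ρ, Riem g ρ μ ρ ν x

/-- Scalar product of two vectors with respect to the metric at `x`. -/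
def sq (g : (ι → ℝ) → Matrix ι ι ℝ) (x : ι → ℝ) (v w : ι → ℝ) : ℝ :=
  ∑ μ, ∑ ν, g x μ ν * v μ * w ν

/-- Velocity (tangent vector field) of a parametrized curve. -/
def vel (γ : ℝ → ι → ℝ) (u : ℝ) : ι → ℝ :=
  fun μ => deriv (fun w => γ w μ) u

/-- Covariant derivative, along the curve `γ`, of a vector field `V` given along `γ`. -/
def covD (g : (ι → ℝ) → Matrix ι ι ℝ) (γ V : ℝ → ι → ℝ) (u : ℝ) (μ : ι) : ℝ :=
  deriv (fun w => V w μ) u + ∑ ρ, ∑ σ, Γc g μ ρ σ (γ u) * vel γ u ρ * V u σ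

/-- The (affinely parametrized) geodesic equation at parameter value `u`. -/
def GeodesicAt (g : (ι → ℝ) → Matrix ι ι ℝ) (γ : ℝ → ι → ℝ) (u : ℝ) : Prop :=
  ∀ μ, covD g γ (vel γ) u μ = 0

/-- `γ` is an affinely parametrized geodesic of `g`. -/
def IsGeodesic (g : (ι → ℝ) → Matrix ι ι ℝ) (γ : ℝ → ι → ℝ) : Prop :=
  ∀ u, GeodesicAt g γ u

/-- `E` is parallelly transported along `γ`. -/
def IsParallel (g : (ι → ℝ) → Matrix ι ι ℝ) (γ E : ℝ → ι → ℝ) : Prop :=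
  ∀ u μ, covD g γ E u μ = 0

def SmoothCurve (γ : ℝ → ι → ℝ) : Prop :=
  ∀ μ, ContDiff ℝ (⊤ : ℕ∞) fun u => γ u μ

/-- A smooth symmetric everywhere-nondegenerate metric. -/
def SmoothMetric (g : (ι → ℝ) → Matrix ι ι ℝ) : Prop :=
  (∀ μ ν, ContDiff ℝ (⊤ : ℕ∞) fun x => g x μ ν) ∧
    (∀ x μ ν, g x μ ν = g x ν μ) ∧ ∀ x, IsUnit (g x).det

/-- Lorentzian signature `(−,+,…,+)`: there is a timelike vector whose `g`-orthogonal
complement is positive definite. -/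
def Lorentzian (g : (ι → ℝ) → Matrix ι ι ℝ) : Prop :=
  SmoothMetric g ∧
    ∀ x, ∃ t : ι → ℝ, sq g x t t < 0 ∧ ∀ v : ι → ℝ, sq g x t v = 0 → v ≠ 0 → 0 < sq g x v v

/-- Riemannian (positive definite) metric. -/
def Riemannian (g : (ι → ℝ) → Matrix ι ι ℝ) : Prop :=
  SmoothMetric g ∧ ∀ x, ∀ v : ι → ℝ, v ≠ 0 → 0 < sq g x v v

def NullVec (g : (ι → ℝ) → Matrix ι ι ℝ) (x v : ι → ℝ) : Prop :=
  sq g x v v = 0 ∧ v ≠ 0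

/-- A time orientation: an everywhere timelike vector field. -/
def TimeOrientation (g : (ι → ℝ) → Matrix ι ι ℝ) (T : (ι → ℝ) → ι → ℝ) : Prop :=
  ∀ x, sq g x (T x) (T x) < 0

/-- `v` is a future-pointing causal vector at `x` (wrt the time orientation `T`). -/
def FutureCausal (g : (ι → ℝ) → Matrix ι ι ℝ) (T : (ι → ℝ) → ι → ℝ) (x v : ι → ℝ) : Prop :=
  sq g x v v ≤ 0 ∧ v ≠ 0 ∧ sq g x (T x) v < 0

/-- `S` is met exactly once by every inextendible future-directed causal curve
(inextendibility being encoded by parametrization by Euclidean arclength on all of `ℝ`). -/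
def IsCauchySurface (g : (ι → ℝ) → Matrix ι ι ℝ) (T : (ι → ℝ) → ι → ℝ)
    (S : Set (ι → ℝ)) : Prop :=
  ∀ γ : ℝ → ι → ℝ, (∀ μ, Differentiable ℝ fun u => γ u μ) →
    (∀ u, FutureCausal g T (γ u) (vel γ u)) →
    (∀ u, ∑ μ, (vel γ u μ) ^ 2 = 1) → ∃! u, γ u ∈ S

/-- `g`-gradient vector of a scalar function. -/
def gradVec (g : (ι → ℝ) → Matrix ι ι ℝ) (τ : (ι → ℝ) → ℝ) (x : ι → ℝ) : ι → ℝ :=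
  fun μ => ∑ ν, ginv g x μ ν * pd τ ν x

/-- Existence of a non-compact (spacelike) Cauchy hypersurface, encoded as a regular
level set of a smooth function with timelike gradient. -/
def HasNoncompactCauchySurface (g : (ι → ℝ) → Matrix ι ι ℝ)
    (T : (ι → ℝ) → ι → ℝ) : Prop :=
  ∃ τ : (ι → ℝ) → ℝ, ContDiff ℝ (⊤ : ℕ∞) τ ∧ ¬ IsCompact {x | τ x = 0} ∧
    (∀ x, τ x = 0 → sq g x (gradVec g τ x) (gradVec g τ x) < 0) ∧
    IsCauchySurface g T {x | τ x = 0}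

/-- Null geodesic completeness: every null initial datum extends to a geodesic
defined for all values of the affine parameter. -/
def NullComplete (g : (ι → ℝ) → Matrix ι ι ℝ) : Prop :=
  ∀ x v : ι → ℝ, NullVec g x v →
    ∃ γ : ℝ → ι → ℝ, SmoothCurve γ ∧ γ 0 = x ∧ vel γ 0 = v ∧ IsGeodesic g γ

/-- Future null geodesic completeness. -/
def FutureNullComplete (g : (ι → ℝ) → Matrix ι ι ℝ) (T : (ι → ℝ) → ι → ℝ) : Prop :=
  ∀ x v : ι → ℝ, NullVec g x v → FutureCausal g T x v →
    ∃ γ : ℝ → ι → ℝ, SmoothCurve γ ∧ γ 0 = x ∧ vel γ 0 = v ∧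
      ∀ u, 0 ≤ u → GeodesicAt g γ u

/-! ### Submanifolds given implicitly as regular zero sets -/

/-- Differential (lowered normal covectors) of the defining map `F`. -/
def dFm (F : (ι → ℝ) → κ → ℝ) (α : κ) (μ : ι) (x : ι → ℝ) : ℝ :=
  pd (fun y => F y α) μ x

/-- The normal vectors `ν_α = grad F^α` spanning the normal space. -/
def normalBasis (g : (ι → ℝ) → Matrix ι ι ℝ) (F : (ι → ℝ) → κ → ℝ) (α : κ)
    (x : ι → ℝ) : ι → ℝ :=
  fun μ => ∑ ν, ginv g x μ ν * dFm F α ν x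

/-- Gram matrix `W_{αβ} = g(ν_α, ν_β)` of the normals. -/
def gram (g : (ι → ℝ) → Matrix ι ι ℝ) (F : (ι → ℝ) → κ → ℝ) (x : ι → ℝ) :
    Matrix κ κ ℝ :=
  Matrix.of fun α β => ∑ μ, dFm F α μ x * normalBasis g F β x μ

/-- The (contravariant) orthogonal projector onto the tangent space of `{F = 0}`. -/
def tanProj (g : (ι → ℝ) → Matrix ι ι ℝ) (F : (ι → ℝ) → κ → ℝ) (x : ι → ℝ)
    (μ ν : ι) : ℝ :=
  ginv g x μ ν -
    ∑ α, ∑ β, (gram g F x)⁻¹ α β * normalBasis g F α x μ * normalBasis g F β x ν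

/-- Covariant Hessian `∇_μ ∇_ν F^α`. -/
def hessF (g : (ι → ℝ) → Matrix ι ι ℝ) (F : (ι → ℝ) → κ → ℝ) (α : κ) (μ ν : ι)
    (x : ι → ℝ) : ℝ :=
  pd (fun y => dFm F α ν y) μ x - ∑ lam, Γc g lam μ ν x * dFm F α lam x

/-- The expansion `θ(n)` of the submanifold `{F = 0}` along the normal
`n = ∑ c_α ν_α`, namely `θ(n) = ∑_α c_α h^{μν} ∇_μ∇_ν F^α`. -/
def expansionCoeff (g : (ι → ℝ) → Matrix ι ι ℝ) (F : (ι → ℝ) → κ → ℝ) (x : ι → ℝ)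
    (c : κ → ℝ) : ℝ :=
  ∑ α, c α * ∑ μ, ∑ ν, tanProj g F x μ ν * hessF g F α μ ν x

/-- `v` is tangent to the level set `{F = 0}` at `x`. -/
def TangentTo (F : (ι → ℝ) → κ → ℝ) (x v : ι → ℝ) : Prop :=
  ∀ α, ∑ μ, dFm F α μ x * v μ = 0

/-- The normal vector with components `c` in the basis of normals. -/
def NormalComb (g : (ι → ℝ) → Matrix ι ι ℝ) (F : (ι → ℝ) → κ → ℝ) (x : ι → ℝ)
    (c : κ → ℝ) : ι → ℝ :=
  fun μ => ∑ α, c α * normalBasis g F α x μ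

/-- A closed (compact without boundary) spacelike submanifold, given as the regular
zero set of the smooth map `F`, of co-dimension `card κ`. -/
def ClosedSpacelikeSubmanifold (g : (ι → ℝ) → Matrix ι ι ℝ)
    (F : (ι → ℝ) → κ → ℝ) : Prop :=
  (∀ α, ContDiff ℝ (⊤ : ℕ∞) fun x => F x α) ∧
    IsCompact {x | ∀ α, F x α = 0} ∧ {x | ∀ α, F x α = 0}.Nonempty ∧
    (∀ x, (∀ α, F x α = 0) → IsUnit (gram g F x).det) ∧
    (∀ x, (∀ α, F x α = 0) → ∀ v, TangentTo F x v → v ≠ 0 → 0 < sq g x v v)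

/-- Future-trapped: every future-pointing causal normal has negative expansion. -/
def FutureTrapped (g : (ι → ℝ) → Matrix ι ι ℝ) (T : (ι → ℝ) → ι → ℝ)
    (F : (ι → ℝ) → κ → ℝ) : Prop :=
  ∀ x, (∀ α, F x α = 0) → ∀ c : κ → ℝ,
    FutureCausal g T x (NormalComb g F x c) → expansionCoeff g F x c < 0

/-! ### Warped products -/

def basePt {d₁ d₂ : ℕ} (x : (Fin d₁ ⊕ Fin d₂) → ℝ) : Fin d₁ → ℝ :=
  fun a => x (Sum.inl a)

def fibPt {d₁ d₂ : ℕ} (x : (Fin d₁ ⊕ Fin d₂) → ℝ) : Fin d₂ → ℝ :=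
  fun i => x (Sum.inr i)

/-- The warped product metric `g = ĝ + f² ḡ` in adapted coordinates. -/
def warped {d₁ d₂ : ℕ} (gB : (Fin d₁ → ℝ) → Matrix (Fin d₁) (Fin d₁) ℝ)
    (gF : (Fin d₂ → ℝ) → Matrix (Fin d₂) (Fin d₂) ℝ) (f : (Fin d₁ → ℝ) → ℝ) :
    ((Fin d₁ ⊕ Fin d₂) → ℝ) → Matrix (Fin d₁ ⊕ Fin d₂) (Fin d₁ ⊕ Fin d₂) ℝ :=
  fun x => Matrix.of fun μ ν =>
    match μ, ν with
    | Sum.inl a, Sum.inl b => gB (basePt x) a b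
    | Sum.inl _, Sum.inr _ => 0
    | Sum.inr _, Sum.inl _ => 0
    | Sum.inr i, Sum.inr j => (f (basePt x)) ^ 2 * gF (fibPt x) i j

/-- Projection of a spacetime curve to the base. -/
def baseCurve {d₁ d₂ : ℕ} (γ : ℝ → (Fin d₁ ⊕ Fin d₂) → ℝ) : ℝ → Fin d₁ → ℝ :=
  fun u => basePt (γ u)

/-- Projection of a spacetime curve to the fiber. -/
def fibCurve {d₁ d₂ : ℕ} (γ : ℝ → (Fin d₁ ⊕ Fin d₂) → ℝ) : ℝ → Fin d₂ → ℝ :=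
  fun u => fibPt (γ u)

/-- Lift of a base vector to the warped product (vanishing fiber components). -/
def liftVec {d₁ d₂ : ℕ} (v : Fin d₁ → ℝ) : (Fin d₁ ⊕ Fin d₂) → ℝ :=
  fun μ => match μ with
  | Sum.inl a => v a
  | Sum.inr _ => 0

/-- Lift of a base vector field (e.g. a time orientation) to the warped product. -/
def liftT {d₁ d₂ : ℕ} (T : (Fin d₁ → ℝ) → Fin d₁ → ℝ) :
    ((Fin d₁ ⊕ Fin d₂) → ℝ) → (Fin d₁ ⊕ Fin d₂) → ℝ :=
  fun x => liftVec (T (basePt x))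

/-- Defining map of the lift `ζ_p ⊆ Y_p` of the submanifold `{Fb = 0} ⊆ Y`. -/
def liftF {d₁ d₂ m' : ℕ} (p : Fin d₁ → ℝ) (Fb : (Fin d₂ → ℝ) → Fin m' → ℝ) :
    ((Fin d₁ ⊕ Fin d₂) → ℝ) → (Fin d₁ ⊕ Fin m') → ℝ :=
  fun x α => match α with
  | Sum.inl a => x (Sum.inl a) - p a
  | Sum.inr β => Fb (fibPt x) β

/-- Covariant Hessian `∇_μ∇_ν f` of a scalar function. -/
def hess (g : (ι → ℝ) → Matrix ι ι ℝ) (f : (ι → ℝ) → ℝ) (μ ν : ι) (x : ι → ℝ) : ℝ :=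
  pd (fun y => pd f ν y) μ x - ∑ lam, Γc g lam μ ν x * pd f lam x

/-- `∇^μ f ∇_μ f`. -/
def gradSq (g : (ι → ℝ) → Matrix ι ι ℝ) (f : (ι → ℝ) → ℝ) (x : ι → ℝ) : ℝ :=
  ∑ μ, ∑ ν, ginv g x μ ν * pd f μ x * pd f ν x

/-! ### Parametrized submanifolds and their expansions -/

/-- Partial derivative of a parametrization `φ`. -/
def dpar {k : ℕ} (φ : (Fin k → ℝ) → ι → ℝ) (A : Fin k) (μ : ι)
    (y : Fin k → ℝ) : ℝ :=
  fderiv ℝ (fun z => φ z μ) y (Pi.single A 1)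

/-- First fundamental form of a parametrized submanifold. -/
def firstFF {k : ℕ} (g : (ι → ℝ) → Matrix ι ι ℝ) (φ : (Fin k → ℝ) → ι → ℝ)
    (y : Fin k → ℝ) : Matrix (Fin k) (Fin k) ℝ :=
  Matrix.of fun A B => ∑ μ, ∑ ν, g (φ y) μ ν * dpar φ A μ y * dpar φ B ν y

/-- The expansion `θ(n) = n_μ H^μ` of a parametrized submanifold along a normal `n`,
via `θ(n) = −γ^{AB} n_μ (∂_A∂_B φ^μ + Γ^μ_{ρσ} ∂_A φ^ρ ∂_B φ^σ)`. -/
def expansionPar {k : ℕ} (g : (ι → ℝ) → Matrix ι ι ℝ) (φ : (Fin k → ℝ) → ι → ℝ)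
    (y : Fin k → ℝ) (n : ι → ℝ) : ℝ :=
  - ∑ A, ∑ B, (firstFF g φ y)⁻¹ A B *
      ∑ μ, (∑ ν, g (φ y) μ ν * n ν) *
        (fderiv ℝ (fun z => dpar φ B μ z) y (Pi.single A 1)
          + ∑ ρ, ∑ σ, Γc g μ ρ σ (φ y) * dpar φ A ρ y * dpar φ B σ y)

/-!
Write `N̂`, `N̄` for the base and fiber parts of the velocity `N` of `γ`. The fiber part of the
geodesic equation says that `f² N̄` is `ḡ`-parallel along the fiber projection of `γ`, so a
`ḡ`-parallel field `Ē` which is orthogonal to `N̄` once stays orthogonal to it. For such an `Ē` the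
vertical field `V = (0, f⁻¹ Ē)` is `g`-parallel, so uniqueness for linear differential equations
identifies it with the parallel transport of `(0, f⁻¹ Ē)` from the starting point.

For a vertical vector `V = (0, v)` the tidal operator `N ↦ R(N, V)V` is block diagonal: it is
`−f ḡ(v, v) ∇̂∇̂f` on the base, and on the fiber it is that of `ḡ` minus
`|∇̂f|² (ḡ(v, v) N̄ − ḡ(N̄, v) v)`. The base part of the geodesic equation reads
`∇̂_{N̂} N̂ = f ḡ(N̄, N̄) ∇̂f`, whence `f'' = ∇̂∇̂f(N̂, N̂) + f ḡ(N̄, N̄) |∇̂f|²` along `γ`. As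
`ḡ(N̄, v) = 0`, the Hessian and gradient terms therefore add up to `−g(V, V) f⁻¹ f''`.
-/

open Matrix

section LinearODE

variable {X : Type*} [NormedAddCommGroup X] [NormedSpace ℝ X]

lemma eq_zero_of_hasDerivAt_clm_apply {L : ℝ → X →L[ℝ] X} (hL : Continuous L) {x : ℝ → X}
    (hx : ∀ t, HasDerivAt x (L t (x t)) t) {t₀ : ℝ} (h₀ : x t₀ = 0) (t : ℝ) : x t = 0 := by
  set a := min t t₀ - 1
  set b := max t t₀ + 1
  have ht : t ∈ Set.Ioo a b := by grind
  have ht₀ : t₀ ∈ Set.Ioo a b := by grind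
  obtain ⟨C, hC⟩ := isCompact_Icc.exists_bound_of_continuousOn (s := Set.Icc a b) hL.continuousOn
  have hLip : ∀ s ∈ Set.Ioo a b, LipschitzWith C.toNNReal (L s) := fun s hs =>
    (L s).lipschitz.weaken (NNReal.le_toNNReal_of_coe_le (hC s (Set.Ioo_subset_Icc_self hs)))
  exact ODE_solution_unique_of_mem_Ioo (v := fun s => L s) (s := fun _ => Set.univ)
    (fun s hs => (hLip s hs).lipschitzOnWith) ht₀ (fun s _ => ⟨hx s, trivial⟩)
    (g := fun _ => 0)
    (fun s _ => ⟨by simpa using hasDerivAt_const s (0 : X), trivial⟩) h₀ ht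

end LinearODE

omit [DecidableEq ι] in
lemma eq_zero_of_hasDerivAt_mulVec {A : ℝ → Matrix ι ι ℝ} (hA : Continuous A) {x : ℝ → ι → ℝ}
    (hx : ∀ t, HasDerivAt x (A t *ᵥ x t) t) {t₀ : ℝ} (h₀ : x t₀ = 0) (t : ℝ) : x t = 0 :=
  have hcont : Continuous fun M : Matrix ι ι ℝ => (mulVecLin M).toContinuousLinearMap :=
    continuous_clm_apply.2 fun _ => continuous_id.matrix_mulVec continuous_const
  eq_zero_of_hasDerivAt_clm_apply (hcont.comp hA) hx h₀ t

section MatrixCalculus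

variable {X : Type*} [NormedAddCommGroup X] [NormedSpace ℝ X] {M : X → Matrix ι ι ℝ}
  {n : WithTop ℕ∞}

lemma contDiff_matrix_det (hM : ∀ i j, ContDiff ℝ n fun x => M x i j) :
    ContDiff ℝ n fun x => (M x).det := by
  simp only [det_apply]
  exact ContDiff.sum fun σ _ => (contDiff_prod fun i _ => hM _ _).const_smul _

lemma contDiff_matrix_inv (hM : ∀ i j, ContDiff ℝ n fun x => M x i j)
    (hdet : ∀ x, IsUnit (M x).det) (i j : ι) : ContDiff ℝ n fun x => (M x)⁻¹ i j := by
  simp only [inv_def, Ring.inverse_eq_inv', Matrix.smul_apply, smul_eq_mul,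
    adjugate_apply]
  refine ((contDiff_matrix_det hM).inv fun x => (hdet x).ne_zero).mul
    (contDiff_matrix_det fun k l => ?_)
  obtain rfl | hk := eq_or_ne k j
  · simpa only [updateRow_self] using contDiff_const
  · simpa only [updateRow_ne hk] using hM k l

end MatrixCalculus

section PartialDerivative

lemma fderiv_eq_sum_pd (h : (ι → ℝ) → ℝ) (x v : ι → ℝ) :
    fderiv ℝ h x v = ∑ ρ, pd h ρ x * v ρ := by
  conv_lhs => rw [← Finset.univ_sum_single v, map_sum]
  refine Finset.sum_congr rfl fun ρ _ => ?_
  rw [pd, mul_comm, ← smul_eq_mul, ← map_smul, ← Pi.single_smul', smul_eq_mul, mul_one]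

lemma contDiff_pd {m n : WithTop ℕ∞} {h : (ι → ℝ) → ℝ} (hh : ContDiff ℝ n h) (hmn : m + 1 ≤ n)
    (ρ : ι) : ContDiff ℝ m (pd h ρ) :=
  (hh.fderiv_right hmn).clm_apply contDiff_const

omit [Fintype ι] in
lemma pd_const (c : ℝ) (ρ : ι) (x : ι → ℝ) : pd (fun _ => c) ρ x = 0 := by
  simp [pd]

lemma pd_neg (h : (ι → ℝ) → ℝ) (ρ : ι) (x : ι → ℝ) : pd (fun y => -h y) ρ x = -pd h ρ x := by
  rw [pd, fderiv_fun_neg]; rfl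

lemma pd_mul {h k : (ι → ℝ) → ℝ} {x : ι → ℝ} (hh : DifferentiableAt ℝ h x)
    (hk : DifferentiableAt ℝ k x) (ρ : ι) :
    pd (fun y => h y * k y) ρ x = pd h ρ x * k x + h x * pd k ρ x := by
  simp only [pd, fderiv_fun_mul hh hk, _root_.add_apply, _root_.smul_apply, smul_eq_mul]
  ring

omit [DecidableEq ι] [DecidableEq κ] in
lemma fderiv_comp_reindex {h : (κ → ℝ) → ℝ} {e : κ → ι} {x : ι → ℝ}
    (hh : DifferentiableAt ℝ h (x ∘ e)) (v : ι → ℝ) :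
    fderiv ℝ (fun y : ι → ℝ => h (y ∘ e)) x v = fderiv ℝ h (x ∘ e) (v ∘ e) := by
  have he : HasFDerivAt (fun y : ι → ℝ => y ∘ e)
      (ContinuousLinearMap.pi fun b => ContinuousLinearMap.proj (R := ℝ) (e b)) x :=
    (ContinuousLinearMap.pi fun b => ContinuousLinearMap.proj (R := ℝ)
      (φ := fun _ : ι => ℝ) (e b)).hasFDerivAt
  exact congrArg (fun L => L v) (hh.hasFDerivAt.comp x he).fderiv

lemma pd_comp_reindex {h : (κ → ℝ) → ℝ} {e : κ → ι} (he : Function.Injective e) {x : ι → ℝ}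
    (hh : DifferentiableAt ℝ h (x ∘ e)) (b : κ) :
    pd (fun y : ι → ℝ => h (y ∘ e)) (e b) x = pd h b (x ∘ e) := by
  have hsingle : (Pi.single (e b) 1 : ι → ℝ) ∘ e = Pi.single b 1 := by
    ext c; simp [Pi.single_apply, he.eq_iff]
  rw [pd, fderiv_comp_reindex hh, hsingle, pd]

omit [DecidableEq κ] in
lemma pd_comp_reindex_of_notMem_range {h : (κ → ℝ) → ℝ} {e : κ → ι} {x : ι → ℝ}
    (hh : DifferentiableAt ℝ h (x ∘ e)) {ρ : ι} (hρ : ρ ∉ Set.range e) :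
    pd (fun y : ι → ℝ => h (y ∘ e)) ρ x = 0 := by
  have hzero : (Pi.single ρ 1 : ι → ℝ) ∘ e = 0 :=
    funext fun b => Pi.single_eq_of_ne (fun hb => hρ ⟨b, hb⟩) 1
  rw [pd, fderiv_comp_reindex hh, hzero, map_zero]

end PartialDerivative

section ScalarProduct

variable {g : (ι → ℝ) → Matrix ι ι ℝ} {x v v' w w' : ι → ℝ}

omit [DecidableEq ι] in
lemma sq_eq_dotProduct (g : (ι → ℝ) → Matrix ι ι ℝ) (x v w : ι → ℝ) :
    sq g x v w = v ⬝ᵥ g x *ᵥ w := by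
  simp only [sq, dotProduct, mulVec, Finset.mul_sum]
  exact Finset.sum_congr rfl fun μ _ => Finset.sum_congr rfl fun ν _ => by ring

omit [DecidableEq ι] in
lemma sq_smul_left (c : ℝ) : sq g x (c • v) w = c * sq g x v w := by
  simp only [sq_eq_dotProduct, smul_dotProduct, smul_eq_mul]

omit [DecidableEq ι] in
lemma sq_smul_right (c : ℝ) : sq g x v (c • w) = c * sq g x v w := by
  simp only [sq_eq_dotProduct, mulVec_smul, dotProduct_smul, smul_eq_mul]

omit [DecidableEq ι] in
lemma sq_sub_right : sq g x v (w - w') = sq g x v w - sq g x v w' := by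
  simp only [sq_eq_dotProduct, mulVec_sub, dotProduct_sub]

omit [DecidableEq ι] in
lemma sq_zero_right : sq g x v 0 = 0 := by
  simp only [sq_eq_dotProduct, mulVec_zero, dotProduct_zero]

lemma SmoothMetric.isSymm (hg : SmoothMetric g) (x : ι → ℝ) : (g x).IsSymm :=
  Matrix.IsSymm.ext fun μ ν => hg.2.1 x ν μ

lemma SmoothMetric.sq_comm (hg : SmoothMetric g) (x v w : ι → ℝ) : sq g x v w = sq g x w v := by
  rw [sq_eq_dotProduct, sq_eq_dotProduct, dotProduct_mulVec, ← mulVec_transpose,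
    (hg.isSymm x).eq, dotProduct_comm]

lemma SmoothMetric.mul_ginv (hg : SmoothMetric g) (x : ι → ℝ) : g x * ginv g x = 1 :=
  mul_nonsing_inv _ (hg.2.2 x)

lemma SmoothMetric.ginv_mul (hg : SmoothMetric g) (x : ι → ℝ) : ginv g x * g x = 1 :=
  nonsing_inv_mul _ (hg.2.2 x)

lemma gradVec_eq_mulVec (g : (ι → ℝ) → Matrix ι ι ℝ) (h : (ι → ℝ) → ℝ) (x : ι → ℝ) :
    gradVec g h x = ginv g x *ᵥ fun ν => pd h ν x := rfl

lemma SmoothMetric.sq_gradVec (hg : SmoothMetric g) (h : (ι → ℝ) → ℝ) (x v : ι → ℝ) :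
    sq g x v (gradVec g h x) = fderiv ℝ h x v := by
  rw [sq_eq_dotProduct, gradVec_eq_mulVec, mulVec_mulVec, hg.mul_ginv, one_mulVec,
    dotProduct_comm, fderiv_eq_sum_pd]
  rfl

lemma sum_pd_mul_gradVec (g : (ι → ℝ) → Matrix ι ι ℝ) (h : (ι → ℝ) → ℝ) (x : ι → ℝ) :
    ∑ μ, pd h μ x * gradVec g h x μ = gradSq g h x := by
  simp only [gradVec, gradSq, Finset.mul_sum]
  exact Finset.sum_congr rfl fun μ _ => Finset.sum_congr rfl fun ν _ => by ring

end ScalarProduct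

section Christoffel

variable {g : (ι → ℝ) → Matrix ι ι ℝ}

lemma SmoothMetric.contDiff_ginv (hg : SmoothMetric g) (μ ν : ι) :
    ContDiff ℝ (⊤ : ℕ∞) fun x => ginv g x μ ν :=
  contDiff_matrix_inv hg.1 hg.2.2 μ ν

lemma SmoothMetric.contDiff_Γc (hg : SmoothMetric g) (μ ρ σ : ι) :
    ContDiff ℝ (⊤ : ℕ∞) (Γc g μ ρ σ) :=
  contDiff_const.mul <| ContDiff.sum fun ν _ => (hg.contDiff_ginv μ ν).mul <|
    ((contDiff_pd (hg.1 _ _) le_rfl _).add (contDiff_pd (hg.1 _ _) le_rfl _)).sub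
      (contDiff_pd (hg.1 _ _) le_rfl _)

lemma SmoothMetric.contDiff_gradVec (hg : SmoothMetric g) {h : (ι → ℝ) → ℝ}
    (hh : ContDiff ℝ (⊤ : ℕ∞) h) (μ : ι) : ContDiff ℝ (⊤ : ℕ∞) fun x => gradVec g h x μ :=
  ContDiff.sum fun _ _ => (hg.contDiff_ginv _ _).mul (contDiff_pd hh le_rfl _)

lemma SmoothMetric.pd_symm (hg : SmoothMetric g) (μ ν ρ : ι) :
    pd (fun y => g y μ ν) ρ = pd (fun y => g y ν μ) ρ := by
  rw [funext fun y => hg.2.1 y μ ν]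

lemma SmoothMetric.Γc_symm (hg : SmoothMetric g) (μ ρ σ : ι) : Γc g μ ρ σ = Γc g μ σ ρ := by
  funext x
  simp only [Γc, hg.pd_symm ρ σ, add_comm]

lemma SmoothMetric.sum_metric_mul_Γc (hg : SmoothMetric g) (x : ι → ℝ) (μ ρ σ : ι) :
    ∑ l, g x μ l * Γc g l ρ σ x =
      (1 / 2) * (pd (fun y => g y μ σ) ρ x + pd (fun y => g y μ ρ) σ x
        - pd (fun y => g y ρ σ) μ x) := by
  set D : ι → ℝ := fun ν => pd (fun y => g y ν σ) ρ x + pd (fun y => g y ν ρ) σ x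
    - pd (fun y => g y ρ σ) ν x
  have hΓ : (fun l => Γc g l ρ σ x) = (1 / 2 : ℝ) • ginv g x *ᵥ D := rfl
  change (g x *ᵥ fun l => Γc g l ρ σ x) μ = 1 / 2 * D μ
  rw [hΓ, mulVec_smul, mulVec_mulVec, hg.mul_ginv, one_mulVec]
  rfl

lemma SmoothMetric.pd_metric (hg : SmoothMetric g) (x : ι → ℝ) (μ ν ρ : ι) :
    pd (fun y => g y μ ν) ρ x =
      ∑ l, g x ν l * Γc g l ρ μ x + ∑ l, g x μ l * Γc g l ρ ν x := by
  rw [hg.sum_metric_mul_Γc, hg.sum_metric_mul_Γc, hg.pd_symm ν μ, hg.pd_symm ρ μ,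
    hg.pd_symm ρ ν]
  ring

/-- The matrix `Γ(v)^μ_σ = Γ^μ_{ρσ} v^ρ` of the Levi-Civita connection in the direction `v`,
so that `∇_v V = ∂_v V + Γ(v) V`. -/
def connMatrix (g : (ι → ℝ) → Matrix ι ι ℝ) (x v : ι → ℝ) : Matrix ι ι ℝ :=
  of fun μ σ => ∑ ρ, Γc g μ ρ σ x * v ρ

lemma connMatrix_mulVec (g : (ι → ℝ) → Matrix ι ι ℝ) (x v w : ι → ℝ) (μ : ι) :
    (connMatrix g x v *ᵥ w) μ = ∑ ρ, ∑ σ, Γc g μ ρ σ x * v ρ * w σ := by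
  simp only [connMatrix, mulVec, dotProduct, of_apply, Finset.sum_mul]
  exact Finset.sum_comm

lemma SmoothMetric.fderiv_metric (hg : SmoothMetric g) (x v : ι → ℝ) :
    (of fun μ ν => fderiv ℝ (fun y => g y μ ν) x v) =
      (connMatrix g x v)ᵀ * g x + g x * connMatrix g x v := by
  have hlower (μ ν : ι) :
      (g x * connMatrix g x v) μ ν = ∑ ρ, (∑ l, g x μ l * Γc g l ρ ν x) * v ρ := by
    simp only [connMatrix, mul_apply, of_apply, Finset.mul_sum, Finset.sum_mul, mul_assoc]
    exact Finset.sum_comm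
  have htranspose : (connMatrix g x v)ᵀ * g x = (g x * connMatrix g x v)ᵀ := by
    rw [transpose_mul, (hg.isSymm x).eq]
  ext μ ν
  rw [htranspose, Matrix.add_apply, transpose_apply, hlower, hlower, of_apply, fderiv_eq_sum_pd,
    ← Finset.sum_add_distrib]
  exact Finset.sum_congr rfl fun ρ _ => by rw [hg.pd_metric, add_mul]

end Christoffel

section Curves

variable {γ : ℝ → ι → ℝ} {u : ℝ}

omit [Fintype ι] [DecidableEq ι] in
lemma hasDerivAt_vel (hγ : DifferentiableAt ℝ γ u) : HasDerivAt γ (vel γ u) u :=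
  hasDerivAt_pi.2 fun μ => (differentiableAt_pi.1 hγ μ).hasDerivAt

omit [Fintype ι] [DecidableEq ι] in
lemma vel_eq_of_hasDerivAt {v : ι → ℝ} (h : HasDerivAt γ v u) : vel γ u = v :=
  funext fun μ => (hasDerivAt_pi.1 h μ).deriv

omit [DecidableEq ι] in
lemma hasDerivAt_comp_curve {h : (ι → ℝ) → ℝ} (hh : DifferentiableAt ℝ h (γ u))
    (hγ : DifferentiableAt ℝ γ u) :
    HasDerivAt (fun w => h (γ w)) (fderiv ℝ h (γ u) (vel γ u)) u :=
  hh.hasFDerivAt.comp_hasDerivAt u (hasDerivAt_vel hγ)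

omit [DecidableEq ι] in
lemma SmoothCurve.differentiable (hγ : SmoothCurve γ) : Differentiable ℝ γ :=
  (contDiff_pi.2 hγ).differentiable (by simp)

omit [Fintype ι] [DecidableEq ι] in
lemma SmoothCurve.vel (hγ : SmoothCurve γ) : SmoothCurve (vel γ) := fun μ =>
  ((contDiff_infty_iff_deriv (𝕜 := ℝ)).1 (hγ μ)).2

end Curves

section CovariantDerivative

variable {g : (ι → ℝ) → Matrix ι ι ℝ} {γ V W : ℝ → ι → ℝ} {u : ℝ}

lemma covD_eq (g : (ι → ℝ) → Matrix ι ι ℝ) (γ V : ℝ → ι → ℝ) (u : ℝ) :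
    covD g γ V u = vel V u + connMatrix g (γ u) (vel γ u) *ᵥ V u :=
  funext fun μ => by rw [Pi.add_apply, connMatrix_mulVec]; rfl

lemma covD_smul {s : ℝ → ℝ} (hs : DifferentiableAt ℝ s u) (hV : DifferentiableAt ℝ V u) :
    covD g γ (fun w => s w • V w) u = deriv s u • V u + s u • covD g γ V u := by
  rw [covD_eq, covD_eq, vel_eq_of_hasDerivAt (hs.hasDerivAt.fun_smul (hasDerivAt_vel hV)),
    mulVec_smul, smul_add]
  abel

lemma SmoothMetric.hasDerivAt_sq (hg : SmoothMetric g) (hγ : DifferentiableAt ℝ γ u)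
    (hV : DifferentiableAt ℝ V u) (hW : DifferentiableAt ℝ W u) :
    HasDerivAt (fun w => sq g (γ w) (V w) (W w))
      (sq g (γ u) (covD g γ V u) (W u) + sq g (γ u) (V u) (covD g γ W u)) u := by
  set D : Matrix ι ι ℝ := of fun μ ν => fderiv ℝ (fun y => g y μ ν) (γ u) (vel γ u) with hD
  have hterm (μ ν : ι) : HasDerivAt (fun w => g (γ w) μ ν * V w μ * W w ν)
      ((D μ ν * V u μ + g (γ u) μ ν * vel V u μ) * W u ν
        + g (γ u) μ ν * V u μ * vel W u ν) u :=
    ((hasDerivAt_comp_curve ((hg.1 μ ν).differentiable (by simp) _) hγ).mul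
      (hasDerivAt_pi.1 (hasDerivAt_vel hV) μ)).mul (hasDerivAt_pi.1 (hasDerivAt_vel hW) ν)
  refine (HasDerivAt.fun_sum fun μ _ => HasDerivAt.fun_sum fun ν _ => hterm μ ν).congr_deriv ?_
  have hsum : ∑ μ, ∑ ν, ((D μ ν * V u μ + g (γ u) μ ν * vel V u μ) * W u ν
        + g (γ u) μ ν * V u μ * vel W u ν) =
      V u ⬝ᵥ D *ᵥ W u + vel V u ⬝ᵥ g (γ u) *ᵥ W u + V u ⬝ᵥ g (γ u) *ᵥ vel W u := by
    simp only [dotProduct, mulVec, Finset.mul_sum, ← Finset.sum_add_distrib]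
    exact Finset.sum_congr rfl fun μ _ => Finset.sum_congr rfl fun ν _ => by ring
  have htranspose (C : Matrix ι ι ℝ) (v w : ι → ℝ) : v ⬝ᵥ Cᵀ *ᵥ w = (C *ᵥ v) ⬝ᵥ w := by
    rw [dotProduct_mulVec, vecMul_transpose]
  rw [hsum, hD, hg.fderiv_metric, covD_eq, covD_eq, sq_eq_dotProduct, sq_eq_dotProduct, add_mulVec,
    ← mulVec_mulVec, ← mulVec_mulVec, mulVec_add, dotProduct_add, dotProduct_add, add_dotProduct,
    htranspose]
  ring

lemma IsParallel.covD_eq_zero (hV : IsParallel g γ V) (u : ℝ) : covD g γ V u = 0 :=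
  funext (hV u)

lemma IsGeodesic.isParallel_vel (hγ : IsGeodesic g γ) : IsParallel g γ (vel γ) := hγ

lemma SmoothMetric.sq_eq_of_isParallel (hg : SmoothMetric g) (hγ : Differentiable ℝ γ)
    (hV : Differentiable ℝ V) (hW : Differentiable ℝ W) (hVp : IsParallel g γ V)
    (hWp : IsParallel g γ W) (u u₀ : ℝ) :
    sq g (γ u) (V u) (W u) = sq g (γ u₀) (V u₀) (W u₀) := by
  have hderiv (t : ℝ) : HasDerivAt (fun w => sq g (γ w) (V w) (W w)) 0 t :=
    (hg.hasDerivAt_sq (hγ t) (hV t) (hW t)).congr_deriv <| by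
      rw [hVp.covD_eq_zero, hWp.covD_eq_zero, sq_zero_right, hg.sq_comm, sq_zero_right, add_zero]
  exact is_const_of_deriv_eq_zero (fun t => (hderiv t).differentiableAt)
    (fun t => (hderiv t).deriv) u u₀

lemma IsParallel.hasDerivAt (hVp : IsParallel g γ V) (hV : DifferentiableAt ℝ V u) :
    HasDerivAt V (-(connMatrix g (γ u) (vel γ u) *ᵥ V u)) u :=
  (hasDerivAt_vel hV).congr_deriv <|
    eq_neg_of_add_eq_zero_left <| (covD_eq g γ V u).symm.trans (hVp.covD_eq_zero u)

lemma SmoothMetric.continuous_connMatrix_vel (hg : SmoothMetric g) (hγ : SmoothCurve γ) :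
    Continuous fun t => connMatrix g (γ t) (vel γ t) :=
  continuous_matrix fun μ σ => continuous_finsetSum _ fun ρ _ =>
    ((hg.contDiff_Γc μ ρ σ).continuous.comp hγ.differentiable.continuous).mul
      (hγ.vel ρ).continuous

lemma IsParallel.eq_of_eq (hg : SmoothMetric g) (hγ : SmoothCurve γ) (hV : Differentiable ℝ V)
    (hW : Differentiable ℝ W) (hVp : IsParallel g γ V) (hWp : IsParallel g γ W) {u₀ : ℝ}
    (h₀ : V u₀ = W u₀) (u : ℝ) : V u = W u := by
  refine sub_eq_zero.1 <| eq_zero_of_hasDerivAt_mulVec (x := fun t => V t - W t)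
    (A := fun t => -connMatrix g (γ t) (vel γ t))
    (hg.continuous_connMatrix_vel hγ).neg (fun t => ?_) (sub_eq_zero.2 h₀) u
  refine ((hVp.hasDerivAt (hV t)).sub (hWp.hasDerivAt (hW t))).congr_deriv ?_
  rw [neg_mulVec, mulVec_sub, neg_sub]
  abel

/-- The covariant derivative `(∇X)^a_b = ∇_b X^a` of a vector field, as a matrix, so that
`∇_v X` is `covDeriv g X x *ᵥ v`. -/
def covDeriv (g : (ι → ℝ) → Matrix ι ι ℝ) (X : (ι → ℝ) → ι → ℝ) (x : ι → ℝ) : Matrix ι ι ℝ :=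
  of fun a b => pd (fun y => X y a) b x + ∑ c, Γc g a b c x * X x c

lemma covD_comp_curve {X : (ι → ℝ) → ι → ℝ} (hX : DifferentiableAt ℝ X (γ u))
    (hγ : DifferentiableAt ℝ γ u) :
    covD g γ (fun w => X (γ w)) u = covDeriv g X (γ u) *ᵥ vel γ u := by
  ext a
  have hvel : vel (fun w => X (γ w)) u a = ∑ b, pd (fun y => X y a) b (γ u) * vel γ u b := by
    rw [← fderiv_eq_sum_pd]
    exact (hasDerivAt_comp_curve (differentiableAt_pi.1 hX a) hγ).deriv
  rw [covD_eq, Pi.add_apply, hvel, connMatrix_mulVec]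
  simp only [covDeriv, mulVec, dotProduct, of_apply, add_mul, Finset.sum_add_distrib,
    Finset.sum_mul, mul_right_comm]

lemma SmoothMetric.hasDerivAt_fderiv_vel (hg : SmoothMetric g) {h : (ι → ℝ) → ℝ}
    (hh : ContDiff ℝ (⊤ : ℕ∞) h) (hγ : SmoothCurve γ) (u : ℝ) :
    HasDerivAt (fun w => fderiv ℝ h (γ w) (vel γ w))
      (fderiv ℝ h (γ u) (covD g γ (vel γ) u)
        + sq g (γ u) (vel γ u) (covDeriv g (gradVec g h) (γ u) *ᵥ vel γ u)) u := by
  have hgrad : Differentiable ℝ (gradVec g h) :=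
    (contDiff_pi.2 (hg.contDiff_gradVec hh)).differentiable (by simp)
  have hγ' := hγ.differentiable
  rw [← covD_comp_curve (hgrad _) (hγ' u), ← hg.sq_gradVec]
  simp only [← hg.sq_gradVec]
  exact hg.hasDerivAt_sq (hγ' u) (hγ.vel.differentiable u) ((hgrad _).comp u (hγ' u))

end CovariantDerivative

section Curvature

variable {g : (ι → ℝ) → Matrix ι ι ℝ}

/-- The Jacobi (tidal) operator `N ↦ R(N, V)V`, i.e. `N^μ ↦ R^α_{βμν} V^β N^μ V^ν`, as a matrix. -/
def jacobiOp (g : (ι → ℝ) → Matrix ι ι ℝ) (x V : ι → ℝ) : Matrix ι ι ℝ :=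
  of fun α μ => ∑ β, ∑ ν, Riem g α β μ ν x * V β * V ν

lemma jacobiOp_smul (g : (ι → ℝ) → Matrix ι ι ℝ) (x V : ι → ℝ) (c : ℝ) :
    jacobiOp g x (c • V) = c ^ 2 • jacobiOp g x V := by
  ext α μ
  simp only [jacobiOp, of_apply, Matrix.smul_apply, Pi.smul_apply, smul_eq_mul, Finset.mul_sum]
  exact Finset.sum_congr rfl fun β _ => Finset.sum_congr rfl fun ν _ => by ring

lemma sum_riemLow_eq_sq_jacobiOp (g : (ι → ℝ) → Matrix ι ι ℝ) (x N V : ι → ℝ) :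
    ∑ μ, ∑ ν, ∑ ρ, ∑ σ, RiemLow g μ ν ρ σ x * N μ * V ν * N ρ * V σ =
      sq g x N (jacobiOp g x V *ᵥ N) := by
  have hjacobi (l : ι) : (jacobiOp g x V *ᵥ N) l =
      ∑ ν, ∑ ρ, ∑ σ, Riem g l ν ρ σ x * V ν * N ρ * V σ := by
    simp only [jacobiOp, mulVec, dotProduct, of_apply, Finset.sum_mul]
    rw [Finset.sum_comm]
    exact Finset.sum_congr rfl fun ν _ => Finset.sum_congr rfl fun ρ _ =>
      Finset.sum_congr rfl fun σ _ => by ring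
  simp only [sq, hjacobi, RiemLow, Finset.sum_mul, Finset.mul_sum]
  refine Finset.sum_congr rfl fun μ _ => ?_
  refine .trans (Finset.sum_congr rfl fun ν _ => ?_) Finset.sum_comm
  refine .trans (Finset.sum_congr rfl fun ρ _ => ?_) Finset.sum_comm
  refine .trans (Finset.sum_congr rfl fun σ _ => ?_) Finset.sum_comm
  exact Finset.sum_congr rfl fun l _ => by ring

end Curvature

section WarpedProduct

variable {d₁ d₂ : ℕ}

lemma contDiff_basePt {n : WithTop ℕ∞} : ContDiff ℝ n (basePt (d₁ := d₁) (d₂ := d₂)) :=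
  contDiff_pi.2 fun _ => contDiff_apply ..

lemma contDiff_fibPt {n : WithTop ℕ∞} : ContDiff ℝ n (fibPt (d₁ := d₁) (d₂ := d₂)) :=
  contDiff_pi.2 fun _ => contDiff_apply ..

lemma SmoothCurve.baseCurve {γ : ℝ → (Fin d₁ ⊕ Fin d₂) → ℝ} (hγ : SmoothCurve γ) :
    SmoothCurve (baseCurve γ) := fun a => hγ (Sum.inl a)

lemma SmoothCurve.fibCurve {γ : ℝ → (Fin d₁ ⊕ Fin d₂) → ℝ} (hγ : SmoothCurve γ) :
    SmoothCurve (fibCurve γ) := fun i => hγ (Sum.inr i)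

lemma vel_baseCurve (γ : ℝ → (Fin d₁ ⊕ Fin d₂) → ℝ) (u : ℝ) :
    vel (baseCurve γ) u = basePt (vel γ u) := rfl

lemma vel_fibCurve (γ : ℝ → (Fin d₁ ⊕ Fin d₂) → ℝ) (u : ℝ) :
    vel (fibCurve γ) u = fibPt (vel γ u) := rfl

section ProjectedPartialDerivative

variable {x : (Fin d₁ ⊕ Fin d₂) → ℝ} {h : (Fin d₁ → ℝ) → ℝ} {k : (Fin d₂ → ℝ) → ℝ}

lemma pd_comp_basePt_inl (hh : DifferentiableAt ℝ h (basePt x)) (a : Fin d₁) :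
    pd (fun y => h (basePt y)) (Sum.inl a) x = pd h a (basePt x) :=
  pd_comp_reindex Sum.inl_injective hh a

lemma pd_comp_basePt_inr (hh : DifferentiableAt ℝ h (basePt x)) (i : Fin d₂) :
    pd (fun y => h (basePt y)) (Sum.inr i) x = 0 :=
  pd_comp_reindex_of_notMem_range hh (by simp)

lemma pd_comp_fibPt_inl (hk : DifferentiableAt ℝ k (fibPt x)) (a : Fin d₁) :
    pd (fun y => k (fibPt y)) (Sum.inl a) x = 0 :=
  pd_comp_reindex_of_notMem_range hk (by simp)

lemma pd_comp_fibPt_inr (hk : DifferentiableAt ℝ k (fibPt x)) (i : Fin d₂) :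
    pd (fun y => k (fibPt y)) (Sum.inr i) x = pd k i (fibPt x) :=
  pd_comp_reindex Sum.inr_injective hk i

lemma pd_mul_basePt_fibPt (hh : DifferentiableAt ℝ h (basePt x))
    (hk : DifferentiableAt ℝ k (fibPt x)) (μ : Fin d₁ ⊕ Fin d₂) :
    pd (fun y => h (basePt y) * k (fibPt y)) μ x =
      pd (fun y => h (basePt y)) μ x * k (fibPt x) + h (basePt x) * pd (fun y => k (fibPt y)) μ x :=
  pd_mul (hh.comp x (contDiff_basePt.differentiable one_ne_zero x))
    (hk.comp x (contDiff_fibPt.differentiable one_ne_zero x)) μ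

lemma pd_mul_basePt_fibPt_inl (hh : DifferentiableAt ℝ h (basePt x))
    (hk : DifferentiableAt ℝ k (fibPt x)) (a : Fin d₁) :
    pd (fun y => h (basePt y) * k (fibPt y)) (Sum.inl a) x =
      pd h a (basePt x) * k (fibPt x) := by
  rw [pd_mul_basePt_fibPt hh hk, pd_comp_basePt_inl hh, pd_comp_fibPt_inl hk, mul_zero, add_zero]

lemma pd_mul_basePt_fibPt_inr (hh : DifferentiableAt ℝ h (basePt x))
    (hk : DifferentiableAt ℝ k (fibPt x)) (i : Fin d₂) :
    pd (fun y => h (basePt y) * k (fibPt y)) (Sum.inr i) x =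
      h (basePt x) * pd k i (fibPt x) := by
  rw [pd_mul_basePt_fibPt hh hk, pd_comp_basePt_inr hh, pd_comp_fibPt_inr hk, zero_mul, zero_add]

end ProjectedPartialDerivative

variable {gB : (Fin d₁ → ℝ) → Matrix (Fin d₁) (Fin d₁) ℝ}
  {gF : (Fin d₂ → ℝ) → Matrix (Fin d₂) (Fin d₂) ℝ} {f : (Fin d₁ → ℝ) → ℝ}

lemma warped_eq_fromBlocks (gB : (Fin d₁ → ℝ) → Matrix (Fin d₁) (Fin d₁) ℝ)
    (gF : (Fin d₂ → ℝ) → Matrix (Fin d₂) (Fin d₂) ℝ) (f : (Fin d₁ → ℝ) → ℝ)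
    (x : (Fin d₁ ⊕ Fin d₂) → ℝ) :
    warped gB gF f x = fromBlocks (gB (basePt x)) 0 0 (f (basePt x) ^ 2 • gF (fibPt x)) := by
  ext (a | i) (b | j) <;> rfl

lemma sq_warped (x V W : (Fin d₁ ⊕ Fin d₂) → ℝ) :
    sq (warped gB gF f) x V W = sq gB (basePt x) (basePt V) (basePt W)
      + f (basePt x) ^ 2 * sq gF (fibPt x) (fibPt V) (fibPt W) := by
  simp only [sq, Fintype.sum_sum_type, warped, of_apply, basePt, fibPt, zero_mul,
    Finset.sum_const_zero, add_zero, zero_add, Finset.mul_sum, mul_assoc]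

lemma basePt_fromBlocks_mulVec (A : Matrix (Fin d₁) (Fin d₁) ℝ) (B : Matrix (Fin d₁) (Fin d₂) ℝ)
    (C : Matrix (Fin d₂) (Fin d₁) ℝ) (D : Matrix (Fin d₂) (Fin d₂) ℝ) (V : (Fin d₁ ⊕ Fin d₂) → ℝ) :
    basePt (fromBlocks A B C D *ᵥ V) = A *ᵥ basePt V + B *ᵥ fibPt V := by
  rw [fromBlocks_mulVec]; rfl

lemma fibPt_fromBlocks_mulVec (A : Matrix (Fin d₁) (Fin d₁) ℝ) (B : Matrix (Fin d₁) (Fin d₂) ℝ)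
    (C : Matrix (Fin d₂) (Fin d₁) ℝ) (D : Matrix (Fin d₂) (Fin d₂) ℝ) (V : (Fin d₁ ⊕ Fin d₂) → ℝ) :
    fibPt (fromBlocks A B C D *ᵥ V) = C *ᵥ basePt V + D *ᵥ fibPt V := by
  rw [fromBlocks_mulVec]; rfl

lemma pd_warped_inl_inr (a : Fin d₁) (i : Fin d₂) (μ : Fin d₁ ⊕ Fin d₂)
    (x : (Fin d₁ ⊕ Fin d₂) → ℝ) :
    pd (fun y => warped gB gF f y (Sum.inl a) (Sum.inr i)) μ x = 0 :=
  pd_const 0 μ x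

lemma pd_warped_inr_inl (a : Fin d₁) (i : Fin d₂) (μ : Fin d₁ ⊕ Fin d₂)
    (x : (Fin d₁ ⊕ Fin d₂) → ℝ) :
    pd (fun y => warped gB gF f y (Sum.inr i) (Sum.inl a)) μ x = 0 :=
  pd_const 0 μ x

/-- The data of a smooth warped product `M = B ×_f Y` in adapted coordinates. The base and fiber
metrics may have any signature, and the warping function is only required not to vanish. -/
structure SmoothWarping (gB : (Fin d₁ → ℝ) → Matrix (Fin d₁) (Fin d₁) ℝ)
    (gF : (Fin d₂ → ℝ) → Matrix (Fin d₂) (Fin d₂) ℝ) (f : (Fin d₁ → ℝ) → ℝ) : Prop where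
  base : SmoothMetric gB
  fiber : SmoothMetric gF
  contDiff : ContDiff ℝ (⊤ : ℕ∞) f
  ne_zero : ∀ y, f y ≠ 0

namespace SmoothWarping

lemma differentiable (hW : SmoothWarping gB gF f) : Differentiable ℝ f :=
  hW.contDiff.differentiable (by simp)

lemma differentiable_gradVec (hW : SmoothWarping gB gF f) (a : Fin d₁) :
    Differentiable ℝ fun y => gradVec gB f y a :=
  (hW.base.contDiff_gradVec hW.contDiff a).differentiable (by simp)

lemma differentiable_base (hW : SmoothWarping gB gF f) (a b : Fin d₁) :
    Differentiable ℝ fun y => gB y a b :=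
  (hW.base.1 a b).differentiable (by simp)

lemma differentiable_fiber (hW : SmoothWarping gB gF f) (i j : Fin d₂) :
    Differentiable ℝ fun y => gF y i j :=
  (hW.fiber.1 i j).differentiable (by simp)

lemma differentiable_fiber_Γc (hW : SmoothWarping gB gF f) (i j k : Fin d₂) :
    Differentiable ℝ (Γc gF i j k) :=
  (hW.fiber.contDiff_Γc i j k).differentiable (by simp)

lemma warped_mul_fromBlocks_ginv (hW : SmoothWarping gB gF f) (x : (Fin d₁ ⊕ Fin d₂) → ℝ) :
    warped gB gF f x * fromBlocks (ginv gB (basePt x)) 0 0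
      ((f (basePt x) ^ 2)⁻¹ • ginv gF (fibPt x)) = 1 := by
  have hf : f (basePt x) ^ 2 ≠ 0 := pow_ne_zero 2 (hW.ne_zero _)
  simp only [warped_eq_fromBlocks, fromBlocks_multiply, hW.base.mul_ginv, hW.fiber.mul_ginv,
    Matrix.mul_zero, Matrix.zero_mul, Matrix.smul_mul, Matrix.mul_smul, smul_smul, add_zero,
    zero_add, inv_mul_cancel₀ hf, smul_zero, one_smul, fromBlocks_one]

lemma ginv_warped (hW : SmoothWarping gB gF f) (x : (Fin d₁ ⊕ Fin d₂) → ℝ) :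
    ginv (warped gB gF f) x = fromBlocks (ginv gB (basePt x)) 0 0
      ((f (basePt x) ^ 2)⁻¹ • ginv gF (fibPt x)) :=
  inv_eq_right_inv (hW.warped_mul_fromBlocks_ginv x)

lemma smoothMetric_warped (hW : SmoothWarping gB gF f) : SmoothMetric (warped gB gF f) := by
  refine ⟨?_, ?_, fun x => isUnit_det_of_right_inverse (hW.warped_mul_fromBlocks_ginv x)⟩
  · rintro (a | i) (b | j)
    · exact (hW.base.1 a b).comp contDiff_basePt
    · exact contDiff_const
    · exact contDiff_const
    · exact ((hW.contDiff.comp contDiff_basePt).pow 2).mul ((hW.fiber.1 i j).comp contDiff_fibPt)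
  · rintro x (a | i) (b | j)
    · exact hW.base.2.1 _ _ _
    · rfl
    · rfl
    · exact congrArg (f (basePt x) ^ 2 * ·) (hW.fiber.2.1 _ i j)

section Christoffel

lemma pd_warped_inl_inl_inl (hW : SmoothWarping gB gF f) (a b c : Fin d₁)
    (x : (Fin d₁ ⊕ Fin d₂) → ℝ) :
    pd (fun y => warped gB gF f y (Sum.inl a) (Sum.inl b)) (Sum.inl c) x =
      pd (fun y => gB y a b) c (basePt x) :=
  pd_comp_basePt_inl (hW.differentiable_base a b _) c

lemma pd_warped_inl_inl_inr (hW : SmoothWarping gB gF f) (a b : Fin d₁) (i : Fin d₂)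
    (x : (Fin d₁ ⊕ Fin d₂) → ℝ) :
    pd (fun y => warped gB gF f y (Sum.inl a) (Sum.inl b)) (Sum.inr i) x = 0 :=
  pd_comp_basePt_inr (hW.differentiable_base a b _) i

lemma pd_warped_inr_inr_inl (hW : SmoothWarping gB gF f) (i j : Fin d₂) (c : Fin d₁)
    (x : (Fin d₁ ⊕ Fin d₂) → ℝ) :
    pd (fun y => warped gB gF f y (Sum.inr i) (Sum.inr j)) (Sum.inl c) x =
      2 * f (basePt x) * pd f c (basePt x) * gF (fibPt x) i j := by
  have hf := hW.differentiable (basePt x)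
  have hsq : pd (fun z => f z ^ 2) c (basePt x) = 2 * f (basePt x) * pd f c (basePt x) := by
    simp only [pow_two, pd_mul hf hf]
    ring
  rw [← hsq]
  exact pd_mul_basePt_fibPt_inl (h := fun z => f z ^ 2) (k := fun z => gF z i j) (hf.pow 2)
    (hW.differentiable_fiber i j _) c

lemma pd_warped_inr_inr_inr (hW : SmoothWarping gB gF f) (i j l : Fin d₂)
    (x : (Fin d₁ ⊕ Fin d₂) → ℝ) :
    pd (fun y => warped gB gF f y (Sum.inr i) (Sum.inr j)) (Sum.inr l) x =
      f (basePt x) ^ 2 * pd (fun z => gF z i j) l (fibPt x) :=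
  pd_mul_basePt_fibPt_inr (h := fun z => f z ^ 2) (k := fun z => gF z i j)
    ((hW.differentiable _).pow 2) (hW.differentiable_fiber i j _) l

lemma Γc_inl_inl_inl (hW : SmoothWarping gB gF f) (a b c : Fin d₁) :
    Γc (warped gB gF f) (Sum.inl a) (Sum.inl b) (Sum.inl c) = fun x => Γc gB a b c (basePt x) := by
  funext x
  simp only [Γc, hW.ginv_warped, Fintype.sum_sum_type, hW.pd_warped_inl_inl_inl,
    fromBlocks_apply₁₁, fromBlocks_apply₁₂, Matrix.zero_apply, zero_mul, Finset.sum_const_zero,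
    add_zero]

lemma Γc_inl_inl_inr (hW : SmoothWarping gB gF f) (a b : Fin d₁) (i : Fin d₂) :
    Γc (warped gB gF f) (Sum.inl a) (Sum.inl b) (Sum.inr i) = fun _ => 0 := by
  funext x
  simp [Γc, hW.ginv_warped, hW.pd_warped_inl_inl_inr, pd_warped_inl_inr]

lemma Γc_inl_inr_inl (hW : SmoothWarping gB gF f) (a b : Fin d₁) (i : Fin d₂) :
    Γc (warped gB gF f) (Sum.inl a) (Sum.inr i) (Sum.inl b) = fun _ => 0 := by
  rw [hW.smoothMetric_warped.Γc_symm, hW.Γc_inl_inl_inr]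

lemma Γc_inl_inr_inr (hW : SmoothWarping gB gF f) (a : Fin d₁) (i j : Fin d₂) :
    Γc (warped gB gF f) (Sum.inl a) (Sum.inr i) (Sum.inr j) = fun x =>
      -(f (basePt x) * gradVec gB f (basePt x) a) * gF (fibPt x) i j := by
  funext x
  simp only [Γc, gradVec, hW.ginv_warped, Fintype.sum_sum_type, pd_warped_inl_inr,
    hW.pd_warped_inr_inr_inl, fromBlocks_apply₁₁, fromBlocks_apply₁₂, Matrix.zero_apply, zero_mul,
    Finset.sum_const_zero, add_zero, zero_sub, mul_neg, Finset.sum_neg_distrib, Finset.mul_sum,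
    Finset.sum_mul, neg_mul]
  congr 1
  exact Finset.sum_congr rfl fun _ _ => by ring

lemma Γc_inr_inl_inl (hW : SmoothWarping gB gF f) (i : Fin d₂) (b c : Fin d₁) :
    Γc (warped gB gF f) (Sum.inr i) (Sum.inl b) (Sum.inl c) = fun _ => 0 := by
  funext x
  simp [Γc, hW.ginv_warped, hW.pd_warped_inl_inl_inr, pd_warped_inr_inl]

lemma Γc_inr_inl_inr (hW : SmoothWarping gB gF f) (i j : Fin d₂) (b : Fin d₁) :
    Γc (warped gB gF f) (Sum.inr i) (Sum.inl b) (Sum.inr j) = fun x =>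
      ((f (basePt x))⁻¹ * pd f b (basePt x)) * (1 : Matrix (Fin d₂) (Fin d₂) ℝ) i j := by
  funext x
  have hf : f (basePt x) ≠ 0 := hW.ne_zero _
  rw [← hW.fiber.ginv_mul (fibPt x), Matrix.mul_apply]
  simp only [Γc, hW.ginv_warped, Fintype.sum_sum_type, pd_warped_inl_inr, pd_warped_inr_inl,
    hW.pd_warped_inr_inr_inl, fromBlocks_apply₂₁, fromBlocks_apply₂₂, Matrix.zero_apply, zero_mul,
    Finset.sum_const_zero, add_zero, zero_add, sub_zero, Finset.mul_sum, Matrix.smul_apply,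
    smul_eq_mul]
  exact Finset.sum_congr rfl fun _ _ => by field_simp

lemma Γc_inr_inr_inl (hW : SmoothWarping gB gF f) (i j : Fin d₂) (b : Fin d₁) :
    Γc (warped gB gF f) (Sum.inr i) (Sum.inr j) (Sum.inl b) = fun x =>
      ((f (basePt x))⁻¹ * pd f b (basePt x)) * (1 : Matrix (Fin d₂) (Fin d₂) ℝ) i j := by
  rw [hW.smoothMetric_warped.Γc_symm, hW.Γc_inr_inl_inr]

lemma Γc_inr_inr_inr (hW : SmoothWarping gB gF f) (i j l : Fin d₂) :
    Γc (warped gB gF f) (Sum.inr i) (Sum.inr j) (Sum.inr l) = fun x => Γc gF i j l (fibPt x) := by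
  funext x
  have hf : f (basePt x) ≠ 0 := hW.ne_zero _
  simp only [Γc, hW.ginv_warped, Fintype.sum_sum_type, hW.pd_warped_inr_inr_inr,
    fromBlocks_apply₂₁, fromBlocks_apply₂₂, Matrix.zero_apply, zero_mul, Finset.sum_const_zero,
    zero_add, Finset.mul_sum, Matrix.smul_apply, smul_eq_mul]
  exact Finset.sum_congr rfl fun _ _ => by field_simp

end Christoffel

section Curvature

variable (x : (Fin d₁ ⊕ Fin d₂) → ℝ)

lemma Riem_inl_inr_inl_inr (hW : SmoothWarping gB gF f) (a b : Fin d₁) (j l : Fin d₂) :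
    Riem (warped gB gF f) (Sum.inl a) (Sum.inr j) (Sum.inl b) (Sum.inr l) x =
      -(f (basePt x) * covDeriv gB (gradVec gB f) (basePt x) a b) * gF (fibPt x) l j := by
  have hf : f (basePt x) ≠ 0 := hW.ne_zero _
  have hgrad := hW.differentiable_gradVec a (basePt x)
  have hdf := hW.differentiable (basePt x)
  have hpd : pd (fun x => -(f (basePt x) * gradVec gB f (basePt x) a) * gF (fibPt x) l j)
        (Sum.inl b) x =
      -(pd f b (basePt x) * gradVec gB f (basePt x) a
        + f (basePt x) * pd (fun y => gradVec gB f y a) b (basePt x)) * gF (fibPt x) l j := by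
    rw [pd_mul_basePt_fibPt_inl (h := fun y => -(f y * gradVec gB f y a))
      (k := fun y => gF y l j) (hdf.mul hgrad).neg (hW.differentiable_fiber l j _), pd_neg,
      pd_mul hdf hgrad]
  have hsum : ∑ c, Γc gB a b c (basePt x) * (-(f (basePt x) * gradVec gB f (basePt x) c)
        * gF (fibPt x) l j) =
      -(f (basePt x) * ∑ c, Γc gB a b c (basePt x) * gradVec gB f (basePt x) c)
        * gF (fibPt x) l j := by
    rw [Finset.mul_sum, ← Finset.sum_neg_distrib, Finset.sum_mul]
    exact Finset.sum_congr rfl fun c _ => by ring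
  simp only [Riem, hW.Γc_inl_inr_inr, hW.Γc_inl_inl_inr, hW.Γc_inl_inl_inl, hW.Γc_inl_inr_inl,
    hW.Γc_inr_inl_inr, Fintype.sum_sum_type, pd_const, hpd, hsum, zero_mul, Finset.sum_const_zero,
    add_zero, zero_add, Matrix.one_apply, mul_ite, mul_one, mul_zero, Finset.sum_ite_eq',
    Finset.mem_univ, if_true, covDeriv, of_apply]
  field_simp
  ring

lemma Riem_inl_inr_inr_inr (hW : SmoothWarping gB gF f) (a : Fin d₁) (j k l : Fin d₂) :
    Riem (warped gB gF f) (Sum.inl a) (Sum.inr j) (Sum.inr k) (Sum.inr l) x = 0 := by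
  have hpd (k l : Fin d₂) :
      pd (fun x => -(f (basePt x) * gradVec gB f (basePt x) a) * gF (fibPt x) l j) (Sum.inr k) x =
        -(f (basePt x) * gradVec gB f (basePt x) a) * pd (fun y => gF y l j) k (fibPt x) :=
    pd_mul_basePt_fibPt_inr (h := fun y => -(f y * gradVec gB f y a)) (k := fun y => gF y l j)
      ((hW.differentiable _).mul (hW.differentiable_gradVec a _)).neg
      (hW.differentiable_fiber l j _) k
  simp only [Riem, hW.Γc_inl_inr_inr, hW.Γc_inl_inr_inl, hW.Γc_inr_inr_inr, hpd,
    Fintype.sum_sum_type, zero_mul, Finset.sum_const_zero, zero_add, mul_assoc, ← Finset.mul_sum,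
    hW.fiber.sum_metric_mul_Γc]
  rw [hW.fiber.pd_symm l k]
  ring

lemma Riem_inr_inr_inl_inr (hW : SmoothWarping gB gF f) (b : Fin d₁) (i j l : Fin d₂) :
    Riem (warped gB gF f) (Sum.inr i) (Sum.inr j) (Sum.inl b) (Sum.inr l) x = 0 := by
  have hbase : pd (fun x => ((f (basePt x))⁻¹ * pd f b (basePt x))
      * (1 : Matrix (Fin d₂) (Fin d₂) ℝ) i j) (Sum.inr l) x = 0 :=
    pd_comp_basePt_inr
      (h := fun y => (f y)⁻¹ * pd f b y * (1 : Matrix (Fin d₂) (Fin d₂) ℝ) i j)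
      ((((hW.differentiable _).inv (hW.ne_zero _)).mul
        ((contDiff_pd (m := (⊤ : ℕ∞)) hW.contDiff le_rfl b).differentiable (by simp) _)).mul_const
          _) l
  simp only [Riem, hW.Γc_inr_inr_inr, hW.Γc_inr_inl_inr, hW.Γc_inr_inl_inl, hW.Γc_inl_inl_inr,
    hbase, pd_comp_fibPt_inl (hW.differentiable_fiber_Γc i l j _), Fintype.sum_sum_type]
  simp only [Matrix.one_apply, mul_ite, mul_one, ite_mul, mul_zero, zero_mul, Finset.sum_ite_eq',
    Finset.sum_ite_eq, Finset.mem_univ, if_true, Finset.sum_const_zero, zero_add]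
  ring

lemma Riem_inr_inr_inr_inr (hW : SmoothWarping gB gF f) (i j k l : Fin d₂) :
    Riem (warped gB gF f) (Sum.inr i) (Sum.inr j) (Sum.inr k) (Sum.inr l) x =
      Riem gF i j k l (fibPt x) - gradSq gB f (basePt x) *
        ((1 : Matrix (Fin d₂) (Fin d₂) ℝ) i k * gF (fibPt x) l j
          - (1 : Matrix (Fin d₂) (Fin d₂) ℝ) i l * gF (fibPt x) k j) := by
  have hf : f (basePt x) ≠ 0 := hW.ne_zero _
  have hsum (k l : Fin d₂) :
      ∑ c, (f (basePt x))⁻¹ * pd f c (basePt x) * (1 : Matrix (Fin d₂) (Fin d₂) ℝ) i k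
        * (-(f (basePt x) * gradVec gB f (basePt x) c) * gF (fibPt x) l j) =
      -gradSq gB f (basePt x) *
        ((1 : Matrix (Fin d₂) (Fin d₂) ℝ) i k * gF (fibPt x) l j) := by
    rw [← sum_pd_mul_gradVec, ← Finset.sum_neg_distrib, Finset.sum_mul]
    exact Finset.sum_congr rfl fun c _ => by field_simp
  simp only [Riem, hW.Γc_inr_inr_inr, hW.Γc_inr_inr_inl, hW.Γc_inl_inr_inr, Fintype.sum_sum_type,
    pd_comp_fibPt_inr (hW.differentiable_fiber_Γc i _ j _), hsum]
  ring

lemma jacobiOp_vertical (hW : SmoothWarping gB gF f) (v : Fin d₂ → ℝ) :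
    jacobiOp (warped gB gF f) x (Sum.elim 0 v) =
      fromBlocks (-(f (basePt x) * sq gF (fibPt x) v v) • covDeriv gB (gradVec gB f) (basePt x)) 0 0
        (jacobiOp gF (fibPt x) v - gradSq gB f (basePt x) •
          (sq gF (fibPt x) v v • 1 - vecMulVec v (gF (fibPt x) *ᵥ v))) := by
  ext (a | i) (b | k)
  · simp only [jacobiOp, of_apply, Fintype.sum_sum_type, Sum.elim_inl, Sum.elim_inr,
      Pi.zero_apply, mul_zero, zero_mul, Finset.sum_const_zero, zero_add, fromBlocks_apply₁₁,
      hW.Riem_inl_inr_inl_inr, Matrix.smul_apply, smul_eq_mul, sq, Finset.mul_sum, Finset.sum_mul,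
      ← Finset.sum_neg_distrib]
    rw [Finset.sum_comm]
    exact Finset.sum_congr rfl fun _ _ => Finset.sum_congr rfl fun _ _ => by ring
  · simp [jacobiOp, hW.Riem_inl_inr_inr_inr]
  · simp [jacobiOp, hW.Riem_inr_inr_inl_inr]
  · have hsq : ∑ j, ∑ l, gF (fibPt x) l j * v j * v l = sq gF (fibPt x) v v := by
      rw [Finset.sum_comm]
      exact Finset.sum_congr rfl fun _ _ => Finset.sum_congr rfl fun _ _ => by ring
    have hvecMulVec :
        ∑ j, ∑ l, (1 : Matrix (Fin d₂) (Fin d₂) ℝ) i l * gF (fibPt x) k j * v j * v l =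
          v i * (gF (fibPt x) *ᵥ v) k := by
      simp [Matrix.one_apply, mulVec, dotProduct, Finset.mul_sum, mul_comm]
    have hterm (j l : Fin d₂) :
        (Riem gF i j k l (fibPt x) - gradSq gB f (basePt x) *
          ((1 : Matrix (Fin d₂) (Fin d₂) ℝ) i k * gF (fibPt x) l j
            - (1 : Matrix (Fin d₂) (Fin d₂) ℝ) i l * gF (fibPt x) k j)) * v j * v l =
        Riem gF i j k l (fibPt x) * v j * v l - gradSq gB f (basePt x) *
          ((1 : Matrix (Fin d₂) (Fin d₂) ℝ) i k * (gF (fibPt x) l j * v j * v l)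
            - (1 : Matrix (Fin d₂) (Fin d₂) ℝ) i l * gF (fibPt x) k j * v j * v l) := by
      ring
    simp only [jacobiOp, of_apply, Fintype.sum_sum_type, Sum.elim_inl, Sum.elim_inr,
      Pi.zero_apply, mul_zero, zero_mul, Finset.sum_const_zero, zero_add, fromBlocks_apply₂₂,
      hW.Riem_inr_inr_inr_inr, hterm, Finset.sum_sub_distrib, ← Finset.mul_sum, hsq, hvecMulVec,
      Matrix.sub_apply, Matrix.smul_apply, smul_eq_mul, vecMulVec_apply]
    ring

lemma sq_jacobiOp_vertical (hW : SmoothWarping gB gF f) (N : (Fin d₁ ⊕ Fin d₂) → ℝ)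
    (v : Fin d₂ → ℝ) :
    sq (warped gB gF f) x N (jacobiOp (warped gB gF f) x (Sum.elim 0 v) *ᵥ N) =
      f (basePt x) ^ 2 * (sq gF (fibPt x) (fibPt N) (jacobiOp gF (fibPt x) v *ᵥ fibPt N)
        - gradSq gB f (basePt x) * (sq gF (fibPt x) (fibPt N) (fibPt N) * sq gF (fibPt x) v v
          - sq gF (fibPt x) (fibPt N) v ^ 2))
      - f (basePt x) * sq gF (fibPt x) v v *
        sq gB (basePt x) (basePt N) (covDeriv gB (gradVec gB f) (basePt x) *ᵥ basePt N) := by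
  have hdot : (gF (fibPt x) *ᵥ v) ⬝ᵥ fibPt N = sq gF (fibPt x) (fibPt N) v := by
    rw [dotProduct_comm, ← sq_eq_dotProduct]
  have hfiber : (jacobiOp gF (fibPt x) v - gradSq gB f (basePt x) •
        (sq gF (fibPt x) v v • 1 - vecMulVec v (gF (fibPt x) *ᵥ v))) *ᵥ fibPt N =
      jacobiOp gF (fibPt x) v *ᵥ fibPt N - gradSq gB f (basePt x) •
        (sq gF (fibPt x) v v • fibPt N - sq gF (fibPt x) (fibPt N) v • v) := by
    rw [sub_mulVec, smul_mulVec, sub_mulVec, smul_mulVec, one_mulVec, vecMulVec_mulVec, hdot,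
      op_smul_eq_smul]
  rw [hW.jacobiOp_vertical, sq_warped, basePt_fromBlocks_mulVec, fibPt_fromBlocks_mulVec,
    zero_mulVec, zero_mulVec, add_zero, zero_add, hfiber, smul_mulVec, sq_smul_right, sq_sub_right,
    sq_smul_right, sq_sub_right, sq_smul_right, sq_smul_right]
  ring

end Curvature

section ConnectionAlongCurves

variable {γ V : ℝ → (Fin d₁ ⊕ Fin d₂) → ℝ} {W : ℝ → Fin d₂ → ℝ}

lemma connMatrix_warped (hW : SmoothWarping gB gF f) (x N : (Fin d₁ ⊕ Fin d₂) → ℝ) :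
    connMatrix (warped gB gF f) x N =
      fromBlocks (connMatrix gB (basePt x) (basePt N))
        (-f (basePt x) • vecMulVec (gradVec gB f (basePt x)) (fibPt N ᵥ* gF (fibPt x)))
        ((f (basePt x))⁻¹ • vecMulVec (fibPt N) fun a => pd f a (basePt x))
        (connMatrix gF (fibPt x) (fibPt N)
          + ((f (basePt x))⁻¹ * fderiv ℝ f (basePt x) (basePt N)) • 1) := by
  ext (a | i) (b | j)
  · simp [connMatrix, hW.Γc_inl_inl_inl, hW.Γc_inl_inr_inl, basePt]
  · simp only [connMatrix, of_apply, Fintype.sum_sum_type, hW.Γc_inl_inl_inr, hW.Γc_inl_inr_inr,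
      zero_mul, Finset.sum_const_zero, zero_add, fromBlocks_apply₁₂, Matrix.smul_apply,
      vecMulVec_apply, vecMul, dotProduct, smul_eq_mul, Finset.mul_sum]
    exact Finset.sum_congr rfl fun l _ => by simp only [fibPt]; ring
  · simp only [connMatrix, Fintype.sum_sum_type, of_apply, hW.Γc_inr_inl_inl, zero_mul,
      Finset.sum_const_zero, hW.Γc_inr_inr_inl, Matrix.one_apply, mul_ite, mul_one, mul_zero,
      ite_mul, Finset.sum_ite_eq, Finset.mem_univ, ↓reduceIte, zero_add, fibPt,
      fromBlocks_apply₂₁, Matrix.smul_apply, vecMulVec_apply, smul_eq_mul]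
    ring
  · simp only [connMatrix, of_apply, Fintype.sum_sum_type, hW.Γc_inr_inl_inr, hW.Γc_inr_inr_inr,
      fromBlocks_apply₂₂, Matrix.add_apply, Matrix.smul_apply, smul_eq_mul, fderiv_eq_sum_pd,
      Finset.mul_sum, Finset.sum_mul, add_comm]
    congr 1
    exact Finset.sum_congr rfl fun c _ => by simp only [basePt]; ring

lemma basePt_covD (hW : SmoothWarping gB gF f) (γ V : ℝ → (Fin d₁ ⊕ Fin d₂) → ℝ) (u : ℝ) :
    basePt (covD (warped gB gF f) γ V u) = covD gB (baseCurve γ) (baseCurve V) u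
      - (f (baseCurve γ u) * sq gF (fibCurve γ u) (vel (fibCurve γ) u) (fibCurve V u))
        • gradVec gB f (baseCurve γ u) := by
  have hsq : (fibPt (vel γ u) ᵥ* gF (fibPt (γ u))) ⬝ᵥ fibPt (V u) =
      sq gF (fibCurve γ u) (vel (fibCurve γ) u) (fibCurve V u) := by
    rw [sq_eq_dotProduct, dotProduct_mulVec]; rfl
  have hbase : basePt (covD (warped gB gF f) γ V u) = vel (baseCurve V) u
      + basePt (connMatrix (warped gB gF f) (γ u) (vel γ u) *ᵥ V u) := by
    rw [covD_eq]; rfl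
  rw [hbase, hW.connMatrix_warped, basePt_fromBlocks_mulVec, smul_mulVec, vecMulVec_mulVec, hsq,
    op_smul_eq_smul, smul_smul, neg_mul, neg_smul, ← sub_eq_add_neg, ← add_sub_assoc, covD_eq]
  rfl

lemma fibPt_covD (hW : SmoothWarping gB gF f) (γ V : ℝ → (Fin d₁ ⊕ Fin d₂) → ℝ) (u : ℝ) :
    fibPt (covD (warped gB gF f) γ V u) = covD gF (fibCurve γ) (fibCurve V) u
      + (f (baseCurve γ u))⁻¹ •
        (fderiv ℝ f (baseCurve γ u) (vel (baseCurve γ) u) • fibCurve V u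
          + fderiv ℝ f (baseCurve γ u) (baseCurve V u) • vel (fibCurve γ) u) := by
  have hfderiv : (fun a => pd f a (basePt (γ u))) ⬝ᵥ basePt (V u) =
      fderiv ℝ f (baseCurve γ u) (baseCurve V u) :=
    (fderiv_eq_sum_pd f _ _).symm
  have hfib : fibPt (covD (warped gB gF f) γ V u) = vel (fibCurve V) u
      + fibPt (connMatrix (warped gB gF f) (γ u) (vel γ u) *ᵥ V u) := by
    rw [covD_eq]; rfl
  rw [hfib, hW.connMatrix_warped, fibPt_fromBlocks_mulVec, add_comm (_ *ᵥ basePt _), smul_mulVec,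
    vecMulVec_mulVec, hfderiv, op_smul_eq_smul, add_mulVec, smul_mulVec, one_mulVec, covD_eq,
    smul_add, mul_smul, add_assoc, add_assoc]
  rfl

lemma covD_baseCurve_vel (hW : SmoothWarping gB gF f) (hgeo : IsGeodesic (warped gB gF f) γ)
    (u : ℝ) :
    covD gB (baseCurve γ) (vel (baseCurve γ)) u =
      (f (baseCurve γ u) * sq gF (fibCurve γ u) (vel (fibCurve γ) u) (vel (fibCurve γ) u))
        • gradVec gB f (baseCurve γ u) := by
  have hbase := hW.basePt_covD γ (vel γ) u
  rw [hgeo.isParallel_vel.covD_eq_zero] at hbase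
  exact sub_eq_zero.1 hbase.symm

lemma covD_fibCurve_vel (hW : SmoothWarping gB gF f) (hgeo : IsGeodesic (warped gB gF f) γ)
    (u : ℝ) :
    covD gF (fibCurve γ) (vel (fibCurve γ)) u =
      -(2 * (f (baseCurve γ u))⁻¹ * fderiv ℝ f (baseCurve γ u) (vel (baseCurve γ) u))
        • vel (fibCurve γ) u := by
  have hfib := hW.fibPt_covD γ (vel γ) u
  rw [hgeo.isParallel_vel.covD_eq_zero] at hfib
  rw [neg_smul]
  refine (eq_neg_of_add_eq_zero_left hfib.symm).trans (congrArg _ ?_)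
  change _ • (_ • vel (fibCurve γ) u + _ • vel (fibCurve γ) u) = _ • vel (fibCurve γ) u
  rw [← add_smul, smul_smul]
  congr 1
  change (f (baseCurve γ u))⁻¹ * (fderiv ℝ f (baseCurve γ u) (vel (baseCurve γ) u)
    + fderiv ℝ f (baseCurve γ u) (vel (baseCurve γ) u)) = _
  ring

lemma hasDerivAt_comp_baseCurve (hW : SmoothWarping gB gF f) (hγ : SmoothCurve γ) (u : ℝ) :
    HasDerivAt (fun w => f (baseCurve γ w))
      (fderiv ℝ f (baseCurve γ u) (vel (baseCurve γ) u)) u :=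
  hasDerivAt_comp_curve (hW.differentiable _) (hγ.baseCurve.differentiable u)

lemma isParallel_sq_smul_vel_fibCurve (hW : SmoothWarping gB gF f) (hγ : SmoothCurve γ)
    (hgeo : IsGeodesic (warped gB gF f) γ) :
    IsParallel gF (fibCurve γ) fun w => f (baseCurve γ w) ^ 2 • vel (fibCurve γ) w := by
  refine fun u => congrFun ?_
  have hf := (hW.hasDerivAt_comp_baseCurve hγ u).fun_pow 2
  rw [covD_smul hf.differentiableAt (hγ.fibCurve.vel.differentiable u), hf.deriv,
    hW.covD_fibCurve_vel hgeo, smul_smul, ← add_smul]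
  refine (congrArg (· • vel (fibCurve γ) u) ?_).trans (zero_smul ..)
  field_simp [hW.ne_zero (baseCurve γ u)]
  ring

lemma deriv_deriv_comp_baseCurve (hW : SmoothWarping gB gF f) (hγ : SmoothCurve γ)
    (hgeo : IsGeodesic (warped gB gF f) γ) (u : ℝ) :
    deriv (deriv fun w => f (baseCurve γ w)) u =
      f (baseCurve γ u) * sq gF (fibCurve γ u) (vel (fibCurve γ) u) (vel (fibCurve γ) u)
          * gradSq gB f (baseCurve γ u)
        + sq gB (baseCurve γ u) (vel (baseCurve γ) u)
          (covDeriv gB (gradVec gB f) (baseCurve γ u) *ᵥ vel (baseCurve γ) u) := by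
  rw [funext fun w => (hW.hasDerivAt_comp_baseCurve hγ w).deriv,
    (hW.base.hasDerivAt_fderiv_vel hW.contDiff hγ.baseCurve u).deriv,
    hW.covD_baseCurve_vel hgeo, map_smul, smul_eq_mul, fderiv_eq_sum_pd, sum_pd_mul_gradVec]

lemma sq_vel_fibCurve_eq_zero (hW : SmoothWarping gB gF f) (hγ : SmoothCurve γ)
    (hgeo : IsGeodesic (warped gB gF f) γ) (hWd : Differentiable ℝ W)
    (hWp : IsParallel gF (fibCurve γ) W) {v : (Fin d₁ ⊕ Fin d₂) → ℝ} {u₀ : ℝ}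
    (hbase : basePt v = 0) (horth : sq (warped gB gF f) (γ u₀) (vel γ u₀) v = 0)
    (h₀ : W u₀ = f (baseCurve γ u₀) • fibPt v) (u : ℝ) :
    sq gF (fibCurve γ u) (vel (fibCurve γ) u) (W u) = 0 := by
  have horth₀ : sq gF (fibCurve γ u₀) (vel (fibCurve γ) u₀) (W u₀) = 0 := by
    rw [sq_warped, hbase, sq_zero_right, zero_add] at horth
    rw [h₀, sq_smul_right]
    exact mul_eq_zero_of_right _
      ((mul_eq_zero.1 horth).resolve_left (pow_ne_zero 2 (hW.ne_zero _)))
  have hd : Differentiable ℝ fun w => f (baseCurve γ w) ^ 2 • vel (fibCurve γ) w := fun w =>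
    ((hW.hasDerivAt_comp_baseCurve hγ w).fun_pow 2).differentiableAt.fun_smul
      (hγ.fibCurve.vel.differentiable w)
  have hconst := hW.fiber.sq_eq_of_isParallel hγ.fibCurve.differentiable hd hWd
    (hW.isParallel_sq_smul_vel_fibCurve hγ hgeo) hWp u u₀
  rw [sq_smul_left, sq_smul_left, horth₀, mul_zero] at hconst
  exact (mul_eq_zero.1 hconst).resolve_left (pow_ne_zero 2 (hW.ne_zero _))

lemma isParallel_vertical (hW : SmoothWarping gB gF f) (hγ : SmoothCurve γ)
    (hWd : Differentiable ℝ W) (hWp : IsParallel gF (fibCurve γ) W)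
    (horth : ∀ u, sq gF (fibCurve γ u) (vel (fibCurve γ) u) (W u) = 0) :
    IsParallel (warped gB gF f) γ fun u => Sum.elim 0 ((f (baseCurve γ u))⁻¹ • W u) := by
  set V : ℝ → (Fin d₁ ⊕ Fin d₂) → ℝ := fun u => Sum.elim 0 ((f (baseCurve γ u))⁻¹ • W u)
  intro u
  have hf := (hW.hasDerivAt_comp_baseCurve hγ u).fun_inv (hW.ne_zero _)
  have hbase : basePt (covD (warped gB gF f) γ V u) = 0 := by
    have hsq : sq gF (fibCurve γ u) (vel (fibCurve γ) u) (fibCurve V u) = 0 :=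
      (sq_smul_right _).trans (by rw [horth, mul_zero])
    have hvel : vel (baseCurve V) u = 0 := vel_eq_of_hasDerivAt (hasDerivAt_const u 0)
    rw [hW.basePt_covD, hsq, mul_zero, zero_smul, sub_zero, covD_eq, hvel, zero_add]
    exact mulVec_zero _
  have hfib : fibPt (covD (warped gB gF f) γ V u) = 0 := by
    have hcov : covD gF (fibCurve γ) (fibCurve V) u = _ :=
      covD_smul hf.differentiableAt (hWd u)
    have hzero : fderiv ℝ f (baseCurve γ u) (baseCurve V u) = 0 := map_zero _
    have hV : fibCurve V u = (f (baseCurve γ u))⁻¹ • W u := rfl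
    have hne := hW.ne_zero (baseCurve γ u)
    rw [hW.fibPt_covD, hcov, hWp.covD_eq_zero, hf.deriv, hzero, hV, smul_zero, zero_smul, add_zero,
      add_zero, smul_smul, smul_smul, ← add_smul]
    refine (congrArg (· • W u) ?_).trans (zero_smul ..)
    field_simp
    ring
  rintro (a | i)
  exacts [congrFun hbase a, congrFun hfib i]

lemma eq_vertical_of_isParallel (hW : SmoothWarping gB gF f) (hγ : SmoothCurve γ)
    (hgeo : IsGeodesic (warped gB gF f) γ) (hVd : Differentiable ℝ V)
    (hVp : IsParallel (warped gB gF f) γ V) (hWd : Differentiable ℝ W)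
    (hWp : IsParallel gF (fibCurve γ) W) {u₀ : ℝ} (hbase : basePt (V u₀) = 0)
    (horth : sq (warped gB gF f) (γ u₀) (vel γ u₀) (V u₀) = 0)
    (h₀ : W u₀ = f (baseCurve γ u₀) • fibPt (V u₀)) (u : ℝ) :
    V u = Sum.elim (0 : Fin d₁ → ℝ) ((f (baseCurve γ u))⁻¹ • W u) := by
  have hvert := hW.isParallel_vertical hγ hWd hWp
    (hW.sq_vel_fibCurve_eq_zero hγ hgeo hWd hWp hbase horth h₀)
  refine hVp.eq_of_eq (u₀ := u₀) hW.smoothMetric_warped hγ hVd ?_ hvert ?_ u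
  · refine differentiable_pi.2 fun μ => ?_
    rcases μ with _ | i
    · exact differentiable_const 0
    · exact fun w => ((hW.hasDerivAt_comp_baseCurve hγ w).fun_inv
        (hW.ne_zero _)).differentiableAt.mul (differentiable_pi.1 hWd i w)
  · rw [h₀, inv_smul_smul₀ (hW.ne_zero _)]
    ext (a | i)
    exacts [congrFun hbase a, rfl]

lemma sq_jacobiOp_of_isParallel (hW : SmoothWarping gB gF f) (hγ : SmoothCurve γ)
    (hgeo : IsGeodesic (warped gB gF f) γ) (hVd : Differentiable ℝ V)
    (hVp : IsParallel (warped gB gF f) γ V) (hWd : Differentiable ℝ W)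
    (hWp : IsParallel gF (fibCurve γ) W) {u₀ : ℝ} (hbase : basePt (V u₀) = 0)
    (horth : sq (warped gB gF f) (γ u₀) (vel γ u₀) (V u₀) = 0)
    (h₀ : W u₀ = f (baseCurve γ u₀) • fibPt (V u₀)) (u : ℝ) :
    sq (warped gB gF f) (γ u) (vel γ u) (jacobiOp (warped gB gF f) (γ u) (V u) *ᵥ vel γ u) =
      sq gF (fibCurve γ u) (vel (fibCurve γ) u)
          (jacobiOp gF (fibCurve γ u) (W u) *ᵥ vel (fibCurve γ) u)
        - sq (warped gB gF f) (γ u₀) (V u₀) (V u₀) * (f (baseCurve γ u))⁻¹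
          * deriv (deriv fun w => f (baseCurve γ w)) u := by
  have hvert := hW.eq_vertical_of_isParallel hγ hgeo hVd hVp hWd hWp hbase horth h₀
  have hne := hW.ne_zero (basePt (γ u))
  have horthW : sq gF (fibPt (γ u)) (fibPt (vel γ u)) (W u) = 0 :=
    hW.sq_vel_fibCurve_eq_zero hγ hgeo hWd hWp hbase horth h₀ u
  have hnorm : sq gF (fibPt (γ u)) (W u) (W u) = sq (warped gB gF f) (γ u₀) (V u₀) (V u₀) := by
    rw [sq_warped, hbase, sq_zero_right, zero_add]
    refine (hW.fiber.sq_eq_of_isParallel hγ.fibCurve.differentiable hWd hWd hWp hWp u u₀).trans ?_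
    rw [h₀, sq_smul_left, sq_smul_right, ← mul_assoc, ← _root_.sq]
    rfl
  rw [hvert u, hW.sq_jacobiOp_vertical, hW.deriv_deriv_comp_baseCurve hγ hgeo, jacobiOp_smul,
    smul_mulVec, sq_smul_left, sq_smul_right, sq_smul_right, sq_smul_right, horthW, hnorm]
  simp only [vel_baseCurve, vel_fibCurve, baseCurve, fibCurve]
  field_simp
  ring

end ConnectionAlongCurves

end SmoothWarping

end WarpedProduct

section CurvatureContraction

omit [DecidableEq ι] in
lemma sum_mul_mul_sum_mul_eq_sum {τ : Type*} [Fintype τ] (T : ι → ι → ι → ι → ℝ) (N : ι → ℝ)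
    (V : τ → ι → ℝ) :
    ∑ μ, ∑ ν, ∑ ρ, ∑ σ, T μ ν ρ σ * N μ * N ρ * ∑ A, V A ν * V A σ =
      ∑ A, ∑ μ, ∑ ν, ∑ ρ, ∑ σ, T μ ν ρ σ * N μ * V A ν * N ρ * V A σ := by
  simp only [Finset.mul_sum]
  refine .trans (Finset.sum_congr rfl fun μ _ => ?_) Finset.sum_comm
  refine .trans (Finset.sum_congr rfl fun ν _ => ?_) Finset.sum_comm
  refine .trans (Finset.sum_congr rfl fun ρ _ => ?_) Finset.sum_comm
  refine .trans (Finset.sum_congr rfl fun σ _ => ?_) Finset.sum_comm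
  exact Finset.sum_congr rfl fun A _ => by ring

lemma sum_riemLow_smul (g : (ι → ℝ) → Matrix ι ι ℝ) (x N V : ι → ℝ) (c : ℝ) :
    ∑ μ, ∑ ν, ∑ ρ, ∑ σ, RiemLow g μ ν ρ σ x * (c * N μ) * V ν * (c * N ρ) * V σ =
      c ^ 2 * ∑ μ, ∑ ν, ∑ ρ, ∑ σ, RiemLow g μ ν ρ σ x * N μ * V ν * N ρ * V σ := by
  refine (sum_riemLow_eq_sq_jacobiOp g x (c • N) V).trans ?_
  rw [sum_riemLow_eq_sq_jacobiOp, mulVec_smul, sq_smul_left, sq_smul_right, ← mul_assoc,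
    ← _root_.sq]

variable {d₁ d₂ : ℕ} {gB : (Fin d₁ → ℝ) → Matrix (Fin d₁) (Fin d₁) ℝ}
  {gF : (Fin d₂ → ℝ) → Matrix (Fin d₂) (Fin d₂) ℝ} {f : (Fin d₁ → ℝ) → ℝ}

theorem curvature_contraction_along_normal_null_geodesic_general {τ : Type*} [Fintype τ]
    (hW : SmoothWarping gB gF f) {γ : ℝ → (Fin d₁ ⊕ Fin d₂) → ℝ} (hγ : SmoothCurve γ)
    (hgeo : IsGeodesic (warped gB gF f) γ) {E : τ → ℝ → (Fin d₁ ⊕ Fin d₂) → ℝ}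
    (hEd : ∀ A, Differentiable ℝ (E A)) (hEpar : ∀ A, IsParallel (warped gB gF f) γ (E A))
    {EF : τ → ℝ → Fin d₂ → ℝ} (hEFd : ∀ A, Differentiable ℝ (EF A))
    (hEFpar : ∀ A, IsParallel gF (fibCurve γ) (EF A)) {u₀ : ℝ}
    (hEbase : ∀ A, basePt (E A u₀) = 0)
    (hEorth : ∀ A, sq (warped gB gF f) (γ u₀) (vel γ u₀) (E A u₀) = 0)
    (hEF : ∀ A, EF A u₀ = f (baseCurve γ u₀) • fibPt (E A u₀)) (u : ℝ) :
    (∑ μ, ∑ ν, ∑ ρ, ∑ σ, RiemLow (warped gB gF f) μ ν ρ σ (γ u)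
        * vel γ u μ * vel γ u ρ * ∑ A, E A u ν * E A u σ) =
      (∑ A, ∑ i, ∑ j, ∑ l, ∑ l', RiemLow gF i j l l' (fibPt (γ u))
        * vel (fibCurve γ) u i * EF A u j * vel (fibCurve γ) u l * EF A u l')
        - (∑ A, sq (warped gB gF f) (γ u₀) (E A u₀) (E A u₀)) * (f (basePt (γ u)))⁻¹
          * deriv (fun w => deriv (fun w' => f (basePt (γ w'))) w) u ∧
    (∑ μ, ∑ ν, ∑ ρ, ∑ σ, RiemLow (warped gB gF f) μ ν ρ σ (γ u)
        * vel γ u μ * vel γ u ρ * ∑ A, E A u ν * E A u σ) =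
      (f (basePt (γ u)) ^ 4)⁻¹ * (∑ A, ∑ i, ∑ j, ∑ l, ∑ l', RiemLow gF i j l l' (fibPt (γ u))
        * (f (basePt (γ u)) ^ 2 * vel (fibCurve γ) u i) * EF A u j
        * (f (basePt (γ u)) ^ 2 * vel (fibCurve γ) u l) * EF A u l')
        - (∑ A, sq (warped gB gF f) (γ u₀) (E A u₀) (E A u₀)) * (f (basePt (γ u)))⁻¹
          * deriv (fun w => deriv (fun w' => f (basePt (γ w'))) w) u := by
  simp only [sum_riemLow_smul]
  rw [← Finset.mul_sum, ← pow_mul, inv_mul_cancel_left₀ (pow_ne_zero _ (hW.ne_zero _)), and_self]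
  simp only [sum_mul_mul_sum_mul_eq_sum, sum_riemLow_eq_sq_jacobiOp, Finset.sum_mul,
    ← Finset.sum_sub_distrib]
  exact Finset.sum_congr rfl fun A _ => hW.sq_jacobiOp_of_isParallel hγ hgeo (hEd A) (hEpar A)
    (hEFd A) (hEFpar A) (hEbase A) (hEorth A) (hEF A) u

end CurvatureContraction

/-- Along a null geodesic `γ` orthogonal to (the lift of) a
compact submanifold `ζ_p ⊆ Y_p` of co-dimension `m`, with `{E_A}` the parallel
transports of an orthonormal tangent basis and `P^{νσ} = δ^{AB}E^ν_AE^σ_B`,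
`R_{μνρσ}N^μN^ρP^{νσ}
  = δ^{AB} R̄_{ijkl} N̄^i N̄^k Ē^j_{A∥} Ē^l_{B∥} − (D−m) f⁻¹ d²f/du²
  = f⁻⁴ δ^{AB} R̄_{ijkl} 𝒩^i 𝒩^k Ē^j_{A∥} Ē^l_{B∥} − (D−m) f⁻¹ d²f/du²`,
where `Ē_{A∥}` are the `ḡ`-parallel transports of `f|_p e_A` along the fiber
projection of `γ` and `𝒩^i = f² N̄^i`. -/
theorem curvature_contraction_along_normal_null_geodesic {n k m : ℕ}
    (hkm : k + m = 4 + n)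
    (gB : (Fin 4 → ℝ) → Matrix (Fin 4) (Fin 4) ℝ)
    (gF : (Fin n → ℝ) → Matrix (Fin n) (Fin n) ℝ)
    (f : (Fin 4 → ℝ) → ℝ)
    (hB : Lorentzian gB) (hF : Riemannian gF)
    (hf : ContDiff ℝ (⊤ : ℕ∞) f) (hfpos : ∀ y, 0 < f y)
    -- the compact submanifold `ζ ⊆ Y`, through whose point the geodesic starts
    (ζ : Set (Fin n → ℝ)) (hζ : IsCompact ζ)
    (γ : ℝ → (Fin 4 ⊕ Fin n) → ℝ) (hγs : SmoothCurve γ)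
    (hq : fibPt (γ 0) ∈ ζ)
    (hgeo : IsGeodesic (warped gB gF f) γ)
    (hnull : ∀ u, sq (warped gB gF f) (γ u) (vel γ u) (vel γ u) = 0)
    -- the parallel transports `E_A` of an orthonormal basis tangent to `ζ_p`
    (E : Fin k → ℝ → (Fin 4 ⊕ Fin n) → ℝ)
    (hEs : ∀ A, SmoothCurve (E A))
    (hEpar : ∀ A, IsParallel (warped gB gF f) γ (E A))
    (hEbase0 : ∀ (A) (a : Fin 4), E A 0 (Sum.inl a) = 0)
    (hEON : ∀ A B, sq (warped gB gF f) (γ 0) (E A 0) (E B 0)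
        = if A = B then (1 : ℝ) else 0)
    (hEorthN : ∀ A, sq (warped gB gF f) (γ 0) (vel γ 0) (E A 0) = 0)
    -- the `ḡ`-parallel transports `Ē_{A∥}` of `f|_p ē_A` along the fiber projection
    (EF : Fin k → ℝ → Fin n → ℝ)
    (hEFs : ∀ A, SmoothCurve (EF A))
    (hEFpar : ∀ (A) (u : ℝ) (i : Fin n),
      deriv (fun w => EF A w i) u
          + ∑ j, ∑ l, Γc gF i j l (fibPt (γ u)) * vel (fibCurve γ) u j * EF A u l = 0)
    (hEF0 : ∀ (A) (i : Fin n), EF A 0 i = f (basePt (γ 0)) * E A 0 (Sum.inr i)) :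
    ∀ u : ℝ,
      (∑ μ, ∑ ν, ∑ ρ, ∑ σ, RiemLow (warped gB gF f) μ ν ρ σ (γ u)
          * vel γ u μ * vel γ u ρ * (∑ A, E A u ν * E A u σ))
        = (∑ A, ∑ i, ∑ j, ∑ l, ∑ l',
            RiemLow gF i j l l' (fibPt (γ u))
              * vel (fibCurve γ) u i * EF A u j * vel (fibCurve γ) u l * EF A u l')
          - (k : ℝ) * (f (basePt (γ u)))⁻¹
              * deriv (fun w => deriv (fun w' => f (basePt (γ w'))) w) u ∧
      (∑ μ, ∑ ν, ∑ ρ, ∑ σ, RiemLow (warped gB gF f) μ ν ρ σ (γ u)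
          * vel γ u μ * vel γ u ρ * (∑ A, E A u ν * E A u σ))
        = ((f (basePt (γ u))) ^ 4)⁻¹ *
            (∑ A, ∑ i, ∑ j, ∑ l, ∑ l',
              RiemLow gF i j l l' (fibPt (γ u))
                * ((f (basePt (γ u))) ^ 2 * vel (fibCurve γ) u i) * EF A u j
                * ((f (basePt (γ u))) ^ 2 * vel (fibCurve γ) u l) * EF A u l')
          - (k : ℝ) * (f (basePt (γ u)))⁻¹
              * deriv (fun w => deriv (fun w' => f (basePt (γ w'))) w) u := by
  intro u
  simpa only [hEON, ↓reduceIte, Finset.sum_const, Finset.card_univ, Fintype.card_fin,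
    nsmul_eq_mul, mul_one] using
    curvature_contraction_along_normal_null_geodesic_general
      ⟨hB.1, hF.1, hf, fun y => (hfpos y).ne'⟩ hγs hgeo (fun A => (hEs A).differentiable) hEpar
      (fun A => (hEFs A).differentiable) hEFpar (fun A => funext (hEbase0 A)) hEorthN
      (fun A => funext (hEF0 A)) u

end Paper
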